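/- arXiv:1806.05460 — 2 statements merged into one kernel-verified Lean document; each statement's English description precedes it below -/
import Mathlib

section
/- Let c > 1, α ∈ (0,1), and let θ be a smooth admissible function with respect to c and α with Fourier coefficients (c_k)_{k∈ℤ}, i.e. θ(x) = ∑_{k∈ℤ} c_k e^{i k c̃ x} with c̃ = 2πα/log c. Let φ₁ be the measure on (0,∞) with φ₁((r,∞)) = r^{−α} θ(log r) for all r > 0. Then for every x ∈ ℝ the series below converges absolutely and ∫₀^∞ (e^{ixy} − 1) dφ₁(y) = −∑_{k∈ℤ} c_k Γ(i k c̃ − α + 1) (−ix)^{α − i k c̃}, where Γ is the complex Gamma function, complex powers are taken with the principal branch, and 0^z := 0 for Re z > 0. -/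
/-!
The idea is to prove the identity with `-i x` replaced by a point `z` of the open right half-plane
and to let `z → -i x`.

For `Re z > 0`, Fubini (`integral_exp_sub_one`) gives
`∫ (e^{-zy} - 1) dφ₁(y) = -z ∫_{(0,∞)} e^{-zr} φ₁((r,∞)) dr`. Inserting the Fourier series of `θ`,
the tail becomes `∑ c_k r^{i k c̃ - α}`, and each term is an Euler integral
`∫ r^{a-1} e^{-zr} dr = z^{-a} Γ(a)` with complex `z` (`integral_cpow_exp`, obtained from the case of
real `z` by the identity theorem). This yields the regularised identity (`integral_tail_exp`).

On the left the limit is dominated convergence with majorant `const * min 1 y`, integrable by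
`integrable_min_one`. On the right `|z^{α - i k c̃}|` grows like `e^{π|k|c̃/2}` near the imaginary
axis, which has to be compensated by the decay of `Γ` on vertical lines. Taking absolute values in
Euler's integral along the ray of angle `π/2 - η` gives
`|Γ(a)| e^{(π/2 - η)|Im a|} ≤ (sin η)^{-Re a} Γ(Re a)` (`norm_Gamma_mul_exp_le`); with `η = 1/|k|`
the loss is only `O(|k|^{1-α})`, so that `c_k = O(k^{-2})` makes the series dominated by
`∑ |k|^{-1-α}` (`summable_majorant`).
-/

open MeasureTheory Real Filter Set Complex

noncomputable section

def IsAdmissible (c α : ℝ) (θ : ℝ → ℝ) : Prop :=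
  (∀ x, 0 < θ x) ∧
  Function.Periodic θ (Real.log (c ^ (1 / α))) ∧
  ∀ y δ : ℝ, 0 ≤ δ → θ (y + δ) ≤ Real.exp (α * δ) * θ y

/-- A smooth admissible function `θ` w.r.t. `c` and `α`, with Fourier coefficients `cfs`:
`θ` is admissible, continuous, and has an absolutely convergent Fourier series
`θ x = ∑_{k∈ℤ} cfs k · e^{i k c̃ x}` with `c̃ = 2πα/log c`, whose coefficients satisfy
`cfs (-k) = conj (cfs k)` and the quadratic decay `‖cfs k‖ ≤ C/k²`. -/
def IsSmoothAdmissible (c α : ℝ) (θ : ℝ → ℝ) (cfs : ℤ → ℂ) : Prop :=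
  IsAdmissible c α θ ∧ Continuous θ ∧
  (∀ k : ℤ, cfs (-k) = starRingEnd ℂ (cfs k)) ∧
  (∃ C > 0, ∀ k : ℤ, k ≠ 0 → ‖cfs k‖ ≤ C / (k : ℝ) ^ 2) ∧
  Summable (fun k : ℤ => ‖cfs k‖) ∧
  ∀ x : ℝ, HasSum
    (fun k : ℤ => cfs k * Complex.exp (Complex.I * (k : ℂ) * ((2 * Real.pi * α / Real.log c : ℝ) : ℂ) * (x : ℂ)))
    ((θ x : ℂ))

/-! ### Euler's integral with a complex parameter -/

theorem integrableOn_rpow_exp {s b : ℝ} (hs : 0 < s) (hb : 0 < b) :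
    IntegrableOn (fun t : ℝ => t ^ (s - 1) * Real.exp (-(b * t))) (Ioi 0) := by
  have := integrableOn_rpow_mul_exp_neg_mul_rpow (p := 1) (s := s - 1) (b := b)
    (by linarith) one_pos hb
  simpa using this

theorem norm_cpow_mul_exp {a z : ℂ} {t : ℝ} (ht : 0 < t) :
    ‖(t : ℂ) ^ (a - 1) * Complex.exp (-(z * t))‖ = t ^ (a.re - 1) * Real.exp (-(z.re * t)) := by
  rw [norm_mul, Complex.norm_cpow_eq_rpow_re_of_pos ht, Complex.norm_exp]
  simp

theorem aesm_cpow_mul_exp (a z : ℂ) :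
    AEStronglyMeasurable (fun t : ℝ => (t : ℂ) ^ (a - 1) * Complex.exp (-(z * t)))
      (volume.restrict (Ioi 0)) := by
  refine ContinuousOn.aestronglyMeasurable (fun t ht => ?_) measurableSet_Ioi
  have ht : 0 < t := ht
  refine ContinuousAt.continuousWithinAt ?_
  refine ContinuousAt.mul ?_ (by fun_prop)
  exact (Complex.continuous_ofReal.continuousAt).cpow continuousAt_const (Or.inl (by simpa using ht))

theorem integrableOn_cpow_exp {a z : ℂ} (ha : 0 < a.re) (hz : 0 < z.re) :
    IntegrableOn (fun t : ℝ => (t : ℂ) ^ (a - 1) * Complex.exp (-(z * t))) (Ioi 0) := by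
  refine (integrableOn_rpow_exp ha hz).mono' (aesm_cpow_mul_exp a z) ?_
  filter_upwards [ae_restrict_mem measurableSet_Ioi] with t ht
  exact (norm_cpow_mul_exp ht).le

theorem differentiableAt_laplace {a z : ℂ} (ha : 0 < a.re) (hz : 0 < z.re) :
    DifferentiableAt ℂ
      (fun w : ℂ => ∫ t in Ioi (0 : ℝ), (t : ℂ) ^ (a - 1) * Complex.exp (-(w * t))) z := by
  have hs : {w : ℂ | z.re / 2 < w.re} ∈ nhds z :=
    (isOpen_lt continuous_const Complex.continuous_re).mem_nhds (by simp; linarith)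
  refine (hasDerivAt_integral_of_dominated_loc_of_deriv_le (μ := volume.restrict (Ioi (0 : ℝ)))
    (F := fun w t => (t : ℂ) ^ (a - 1) * Complex.exp (-(w * t)))
    (F' := fun w t => (t : ℂ) ^ (a - 1) * (Complex.exp (-(w * t)) * (-(t : ℂ))))
    (bound := fun t => t ^ (a.re + 1 - 1) * Real.exp (-(z.re / 2 * t)))
    hs (Eventually.of_forall fun w => aesm_cpow_mul_exp a w)
    (integrableOn_cpow_exp ha hz) ?_ ?_ (integrableOn_rpow_exp (by linarith) (by linarith))
    ?_).2.differentiableAt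
  · simp only [← mul_assoc]
    exact (aesm_cpow_mul_exp a z).mul (by fun_prop)
  · filter_upwards [ae_restrict_mem measurableSet_Ioi] with t ht w hw
    have ht : 0 < t := ht
    have hw : z.re / 2 < w.re := hw
    rw [← mul_assoc, norm_mul, norm_cpow_mul_exp ht, norm_neg, Complex.norm_of_nonneg ht.le,
      mul_right_comm, ← Real.rpow_add_one ht.ne']
    rw [show a.re - 1 + 1 = a.re + 1 - 1 by ring]
    gcongr
  · refine Eventually.of_forall fun t w _ => ?_
    have h : HasDerivAt (fun w : ℂ => -(w * (t : ℂ))) (-(t : ℂ)) w := by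
      simpa using! ((hasDerivAt_id w).mul_const (t : ℂ)).fun_neg
    exact (h.cexp).const_mul _

/-- Euler's integral along a rotated ray: both sides are holomorphic in `z` on the right
half-plane and agree for positive real `z`. -/
theorem integral_cpow_exp {a z : ℂ} (ha : 0 < a.re) (hz : 0 < z.re) :
    ∫ t in Ioi (0 : ℝ), (t : ℂ) ^ (a - 1) * Complex.exp (-(z * t))
      = (1 / z) ^ a * Complex.Gamma a := by
  have hopen : IsOpen {w : ℂ | 0 < w.re} := isOpen_lt continuous_const Complex.continuous_re
  have hconn : IsPreconnected {w : ℂ | 0 < w.re} := (convex_halfSpace_re_gt 0).isPreconnected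
  have hF : AnalyticOnNhd ℂ
      (fun w : ℂ => ∫ t in Ioi (0 : ℝ), (t : ℂ) ^ (a - 1) * Complex.exp (-(w * t)))
      {w : ℂ | 0 < w.re} :=
    DifferentiableOn.analyticOnNhd
      (fun w hw => (differentiableAt_laplace ha hw).differentiableWithinAt) hopen
  have hG : AnalyticOnNhd ℂ (fun w : ℂ => (1 / w) ^ a * Complex.Gamma a) {w : ℂ | 0 < w.re} := by
    refine DifferentiableOn.analyticOnNhd (fun w hw => ?_) hopen
    have hw : 0 < w.re := hw
    have hw0 : w ≠ 0 := by rintro rfl; simp at hw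
    refine DifferentiableAt.differentiableWithinAt ?_
    refine DifferentiableAt.mul_const ?_ _
    refine DifferentiableAt.cpow (by fun_prop (disch := assumption)) (by fun_prop) (Or.inl ?_)
    rw [one_div, Complex.inv_re]
    exact div_pos hw (Complex.normSq_pos.2 hw0)
  refine hF.eqOn_of_preconnected_of_frequently_eq hG hconn (z₀ := 1) (by simp) ?_ hz
  -- the points `1 + u` with `u → 0+` real accumulate at `1`
  have ht : Tendsto (fun u : ℝ => ((1 + u : ℝ) : ℂ)) (nhdsWithin 0 (Ioi 0))
      (nhdsWithin 1 {1}ᶜ) := by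
    refine tendsto_nhdsWithin_iff.2 ⟨?_, ?_⟩
    · have : Tendsto (fun u : ℝ => ((1 + u : ℝ) : ℂ)) (nhds 0) (nhds ((1 + 0 : ℝ) : ℂ)) :=
        (Continuous.tendsto (by fun_prop) _)
      simpa using this.mono_left nhdsWithin_le_nhds
    · filter_upwards [self_mem_nhdsWithin] with u hu
      have hu : 0 < u := hu
      simp only [mem_compl_iff, mem_singleton_iff]
      intro h
      have : 1 + u = 1 := by exact_mod_cast h
      linarith
  refine ht.frequently (Eventually.frequently ?_)
  filter_upwards [self_mem_nhdsWithin] with u hu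
  have hu : 0 < u := hu
  exact Complex.integral_cpow_mul_exp_neg_mul_Ioi ha (by linarith)

/-- Exponential decay of `Γ` on vertical lines, with an explicit loss: rotating the ray in Euler's
integral to angle `π / 2 - η` gains the factor `exp (-(π / 2 - η) * |Im a|)`. -/
theorem norm_Gamma_mul_exp_le {a : ℂ} (ha : 0 < a.re) {η : ℝ} (hη : 0 < η) (hη1 : η ≤ 1) :
    ‖Complex.Gamma a‖ * Real.exp (π / 2 * |a.im|)
      ≤ Real.exp (η * |a.im|) * (π / (2 * η)) ^ a.re * Real.Gamma a.re := by
  have hpi := Real.pi_gt_three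
  obtain ⟨φ, hφ, hφa⟩ : ∃ φ : ℝ, |φ| = π / 2 - η ∧ φ * a.im = (π / 2 - η) * |a.im| := by
    rcases le_total 0 a.im with h | h
    · exact ⟨π / 2 - η, abs_of_pos (by linarith), by rw [abs_of_nonneg h]⟩
    · exact ⟨-(π / 2 - η), by rw [abs_neg, abs_of_pos (by linarith)], by
        rw [abs_of_nonpos h]; ring⟩
  have hre : (Complex.exp (φ * Complex.I)).re = Real.sin η := by
    rw [Complex.exp_ofReal_mul_I_re, ← Real.cos_abs, hφ, Real.cos_pi_div_two_sub]
  have hsin : 2 / π * η ≤ Real.sin η := Real.mul_le_sin hη.le (by linarith)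
  have hpos : 0 < 2 / π * η := by positivity
  have hz : 0 < (Complex.exp (φ * Complex.I)).re := by rw [hre]; linarith
  have key := integral_cpow_exp ha hz
  have hbd : ‖(1 / Complex.exp (φ * Complex.I)) ^ a * Complex.Gamma a‖
      ≤ (1 / Real.sin η) ^ a.re * Real.Gamma a.re := by
    rw [← key, ← hre, ← Real.integral_rpow_mul_exp_neg_mul_Ioi ha hz]
    refine norm_integral_le_of_norm_le (integrableOn_rpow_exp ha hz) ?_
    filter_upwards [ae_restrict_mem measurableSet_Ioi] with t ht
    exact (norm_cpow_mul_exp ht).le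
  have hn : ‖(1 / Complex.exp (φ * Complex.I)) ^ a‖ = Real.exp ((π / 2 - η) * |a.im|) := by
    have habs := abs_le.1 hφ.le
    rw [one_div, ← Complex.exp_neg, Complex.cpow_def_of_ne_zero (Complex.exp_ne_zero _),
      Complex.log_exp (by simp; linarith) (by simp; linarith), Complex.norm_exp, ← hφa]
    congr 1
    simp
  have hG : 0 < Real.Gamma a.re := Real.Gamma_pos_of_pos ha
  have h1 : (1 / Real.sin η) ^ a.re ≤ (π / (2 * η)) ^ a.re := by
    refine Real.rpow_le_rpow (one_div_nonneg.2 (hpos.le.trans hsin)) ?_ ha.le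
    calc 1 / Real.sin η ≤ 1 / (2 / π * η) := one_div_le_one_div_of_le hpos hsin
      _ = π / (2 * η) := by field_simp
  rw [norm_mul, hn] at hbd
  calc ‖Complex.Gamma a‖ * Real.exp (π / 2 * |a.im|)
      = Real.exp (η * |a.im|) * (Real.exp ((π / 2 - η) * |a.im|) * ‖Complex.Gamma a‖) := by
        rw [← mul_assoc, ← Real.exp_add, mul_comm]; ring_nf
    _ ≤ Real.exp (η * |a.im|) * ((π / (2 * η)) ^ a.re * Real.Gamma a.re) := by
        gcongr ?_ * ?_
        exact hbd.trans (by gcongr)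
    _ = _ := by ring

/-! ### The coefficients of the limiting series -/

/-- The majorant of the series is summable: choosing `η = 1 / |k|` in `norm_Gamma_mul_exp_le`
shows that its terms are `O(|k| ^ (-2) * |k| ^ (1 - α))`. -/
theorem summable_majorant {α C ctil : ℝ} (hα0 : 0 < α) (hα1 : α < 1) (cfs : ℤ → ℂ)
    (hC0 : 0 < C) (hC : ∀ k : ℤ, k ≠ 0 → ‖cfs k‖ ≤ C / (k : ℝ) ^ 2) :
    Summable fun k : ℤ => ‖cfs k‖ *
      (‖Complex.Gamma (Complex.I * (k : ℂ) * (ctil : ℂ) - (α : ℂ) + 1)‖ *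
        Real.exp (π / 2 * |k * ctil|)) := by
  have hs : Summable fun k : ℤ => C * (Real.exp |ctil| * (π / 2) ^ (1 - α) *
      Real.Gamma (1 - α)) * |(k : ℝ)| ^ (-(1 + α)) :=
    (Real.summable_abs_int_rpow (by linarith)).mul_left _
  refine Summable.of_norm_bounded_eventually hs ?_
  filter_upwards [(Set.finite_singleton (0 : ℤ)).compl_mem_cofinite] with k hk
  have hk : k ≠ 0 := by simpa using hk
  have hk1 : (1 : ℝ) ≤ |(k : ℝ)| := by exact_mod_cast Int.one_le_abs hk
  have hkpos : 0 < |(k : ℝ)| := by linarith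
  have hre : (Complex.I * (k : ℂ) * (ctil : ℂ) - (α : ℂ) + 1).re = 1 - α := by
    simp; ring
  have him : (Complex.I * (k : ℂ) * (ctil : ℂ) - (α : ℂ) + 1).im = k * ctil := by
    simp
  have h := norm_Gamma_mul_exp_le (a := Complex.I * (k : ℂ) * (ctil : ℂ) - (α : ℂ) + 1)
    (by rw [hre]; linarith) (η := 1 / |(k : ℝ)|) (by positivity)
    (by rw [div_le_one hkpos]; exact hk1)
  rw [hre, him] at h
  have e1 : 1 / |(k : ℝ)| * |k * ctil| = |ctil| := by rw [abs_mul]; field_simp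
  have e2 : (π / (2 * (1 / |(k : ℝ)|))) ^ (1 - α) = (π / 2) ^ (1 - α) * |(k : ℝ)| ^ (1 - α) := by
    rw [← Real.mul_rpow (by positivity) hkpos.le]
    congr 1
    field_simp
  have e3 : |(k : ℝ)| ^ (-(1 + α)) = |(k : ℝ)| ^ (1 - α) / (k : ℝ) ^ 2 := by
    rw [← sq_abs (k : ℝ), ← Real.rpow_natCast, ← Real.rpow_sub hkpos]
    congr 1
    push_cast; ring
  rw [e1, e2] at h
  have hG : 0 < Real.Gamma (1 - α) := Real.Gamma_pos_of_pos (by linarith)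
  rw [Real.norm_of_nonneg (by positivity), e3]
  calc _ ≤ C / (k : ℝ) ^ 2 * (Real.exp |ctil| * ((π / 2) ^ (1 - α) * |(k : ℝ)| ^ (1 - α)) *
        Real.Gamma (1 - α)) := by gcongr; exact hC k hk
    _ = _ := by ring

theorem norm_term_le {α ctil : ℝ} (cf : ℂ) (k : ℤ) {z : ℂ} (hz : z ≠ 0) (hre : 0 ≤ z.re) :
    ‖cf * Complex.Gamma (Complex.I * (k : ℂ) * (ctil : ℂ) - (α : ℂ) + 1) *
        z ^ ((α : ℂ) - Complex.I * (k : ℂ) * (ctil : ℂ))‖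
      ≤ ‖z‖ ^ α * (‖cf‖ * (‖Complex.Gamma (Complex.I * (k : ℂ) * (ctil : ℂ) - (α : ℂ) + 1)‖ *
        Real.exp (π / 2 * |k * ctil|))) := by
  have harg : |z.arg| ≤ π / 2 := Complex.abs_arg_le_pi_div_two_iff.2 hre
  have h1 : ((α : ℂ) - Complex.I * (k : ℂ) * (ctil : ℂ)).re = α := by simp
  have h2 : ((α : ℂ) - Complex.I * (k : ℂ) * (ctil : ℂ)).im = -(k * ctil) := by simp
  have h3 : ‖z ^ ((α : ℂ) - Complex.I * (k : ℂ) * (ctil : ℂ))‖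
      ≤ ‖z‖ ^ α * Real.exp (π / 2 * |k * ctil|) := by
    rw [Complex.norm_cpow_of_ne_zero hz, h1, h2, div_eq_mul_inv, ← Real.exp_neg]
    gcongr
    calc -(z.arg * -(k * ctil)) = z.arg * (k * ctil) := by ring
      _ ≤ |z.arg * (k * ctil)| := le_abs_self _
      _ = |z.arg| * |k * ctil| := abs_mul _ _
      _ ≤ _ := by gcongr
  rw [norm_mul, norm_mul]
  calc _ ≤ ‖cf‖ * ‖Complex.Gamma (Complex.I * (k : ℂ) * (ctil : ℂ) - (α : ℂ) + 1)‖ *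
        (‖z‖ ^ α * Real.exp (π / 2 * |k * ctil|)) := by gcongr
    _ = _ := by ring

/-! ### The regularised identity in the open right half-plane -/

/-- The Laplace transform of the tail `r ^ (-α) * θ (log r)`, integrated term by term. -/
theorem integral_tail_exp {α ctil : ℝ} (hα1 : α < 1) {θ : ℝ → ℝ} {cfs : ℤ → ℂ}
    (hsum : Summable fun k : ℤ => ‖cfs k‖)
    (hθ : ∀ x : ℝ, HasSum
      (fun k : ℤ => cfs k * Complex.exp (Complex.I * (k : ℂ) * (ctil : ℂ) * (x : ℂ))) (θ x : ℂ))
    {z : ℂ} (hz : 0 < z.re) :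
    ∫ r in Ioi (0 : ℝ), ((r ^ (-α) * θ (Real.log r) : ℝ) : ℂ) * Complex.exp (-(z * r))
      = z⁻¹ * ∑' k : ℤ, cfs k * Complex.Gamma (Complex.I * (k : ℂ) * (ctil : ℂ) - (α : ℂ) + 1) *
          z ^ ((α : ℂ) - Complex.I * (k : ℂ) * (ctil : ℂ)) := by
  have hz0 : z ≠ 0 := by rintro rfl; simp at hz
  have hre : ∀ k : ℤ, (Complex.I * (k : ℂ) * (ctil : ℂ) - (α : ℂ) + 1).re = 1 - α := by
    intro k; simp; ring
  have hpos : ∀ k : ℤ, 0 < (Complex.I * (k : ℂ) * (ctil : ℂ) - (α : ℂ) + 1).re := by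
    intro k; rw [hre]; linarith
  have hI : ∀ k : ℤ, IntegrableOn (fun r : ℝ => cfs k *
      ((r : ℂ) ^ ((Complex.I * (k : ℂ) * (ctil : ℂ) - (α : ℂ) + 1) - 1) *
        Complex.exp (-(z * r)))) (Ioi 0) :=
    fun k => (integrableOn_cpow_exp (hpos k) hz).const_mul _
  have hN : Summable fun k : ℤ => ∫ r in Ioi (0 : ℝ), ‖cfs k *
      ((r : ℂ) ^ ((Complex.I * (k : ℂ) * (ctil : ℂ) - (α : ℂ) + 1) - 1) *
        Complex.exp (-(z * r)))‖ := by
    refine (hsum.mul_right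
      (∫ r in Ioi (0 : ℝ), r ^ (1 - α - 1) * Real.exp (-(z.re * r)))).congr fun k => ?_
    rw [← integral_const_mul]
    refine setIntegral_congr_fun measurableSet_Ioi fun r hr => ?_
    rw [norm_mul, norm_cpow_mul_exp hr, hre]
  have key := (hasSum_integral_of_summable_integral_norm hI hN).tsum_eq
  rw [← tsum_mul_left]
  calc _ = ∫ r in Ioi (0 : ℝ), ∑' k : ℤ, cfs k *
      ((r : ℂ) ^ ((Complex.I * (k : ℂ) * (ctil : ℂ) - (α : ℂ) + 1) - 1) *
        Complex.exp (-(z * r))) := by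
        refine setIntegral_congr_fun measurableSet_Ioi fun r hr => ?_
        have hr : 0 < r := hr
        have hr0 : (r : ℂ) ≠ 0 := by exact_mod_cast hr.ne'
        rw [Complex.ofReal_mul, ← (hθ (Real.log r)).tsum_eq, ← tsum_mul_left, ← tsum_mul_right]
        refine tsum_congr fun k => ?_
        rw [Complex.ofReal_cpow hr.le, show Complex.I * (k : ℂ) * (ctil : ℂ) - (α : ℂ) + 1 - 1
          = ((-α : ℝ) : ℂ) + Complex.I * (k : ℂ) * (ctil : ℂ) by push_cast; ring,
          Complex.cpow_add _ _ hr0,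
          Complex.cpow_def_of_ne_zero hr0 (Complex.I * (k : ℂ) * (ctil : ℂ)),
          ← Complex.ofReal_log hr.le, mul_comm (Complex.I * (k : ℂ) * (ctil : ℂ))]
        ring
    _ = _ := by
        rw [← key]
        refine tsum_congr fun k => ?_
        rw [integral_const_mul, integral_cpow_exp (hpos k) hz]
        have harg : z.arg ≠ π := by
          have := Complex.abs_arg_lt_pi_div_two_iff.2 (Or.inl hz)
          have := (abs_lt.1 this).2
          linarith [Real.pi_pos]
        rw [one_div, Complex.inv_cpow _ _ harg, ← Complex.cpow_neg,
          show -(Complex.I * (k : ℂ) * (ctil : ℂ) - (α : ℂ) + 1)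
            = ((α : ℂ) - Complex.I * (k : ℂ) * (ctil : ℂ)) - 1 by ring,
          Complex.cpow_sub _ _ hz0, Complex.cpow_one]
        field_simp

/-- A measure carried by `(0, ∞)` with finite tails is σ-finite. -/
theorem sigmaFinite_of_tails {μ : Measure ℝ} (h0 : μ (Iic 0) = 0)
    (h : ∀ r : ℝ, 0 < r → μ (Ioi r) < ⊤) : SigmaFinite μ := by
  refine ⟨⟨⟨fun n : ℕ => Iic 0 ∪ Ioi (1 / ((n : ℝ) + 1)), fun _ => trivial, fun n => ?_, ?_⟩⟩⟩
  · refine (measure_union_le _ _).trans_lt ?_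
    rw [h0, zero_add]
    exact h _ (by positivity)
  · refine eq_univ_of_forall fun y => mem_iUnion.2 ?_
    rcases le_or_gt y 0 with hy | hy
    · exact ⟨0, Or.inl hy⟩
    · obtain ⟨n, hn⟩ := exists_nat_one_div_lt hy
      exact ⟨n, Or.inr hn⟩

/-- Integration by parts for Laplace transforms, as an application of Fubini's theorem to
`-z * exp (-z r)` on the region `0 < r < y`. -/
theorem integral_exp_sub_one {μ : Measure ℝ} (h0 : μ (Iic 0) = 0)
    (h : ∀ r : ℝ, 0 < r → μ (Ioi r) < ⊤) {z : ℂ} (hz : 0 < z.re)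
    (hint : IntegrableOn (fun r : ℝ => μ.real (Ioi r) * Real.exp (-(z.re * r))) (Ioi 0)) :
    ∫ y, (Complex.exp (-(z * y)) - 1) ∂μ
      = -z * ∫ r in Ioi (0 : ℝ), (μ.real (Ioi r) : ℂ) * Complex.exp (-(z * r)) := by
  have hz0 : z ≠ 0 := by rintro rfl; simp at hz
  have := sigmaFinite_of_tails h0 h
  have hae : ∀ᵐ y ∂μ, 0 < y := by
    rw [ae_iff]; simpa [Iic] using h0
  set f : ℝ → ℝ → ℂ := fun y r => (Ioi r).indicator (fun _ => -z * Complex.exp (-(z * r))) y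
    with hf
  have hfmeas : Measurable (Function.uncurry f) := by
    have : Function.uncurry f = {p : ℝ × ℝ | p.2 < p.1}.indicator
        (fun p => -z * Complex.exp (-(z * p.2))) := by
      ext p
      simp [hf, Function.uncurry, indicator]
    rw [this]
    exact (by fun_prop : Measurable fun p : ℝ × ℝ => -z * Complex.exp (-(z * p.2))).indicator
      (measurableSet_lt measurable_snd measurable_fst)
  have hnorm : ∀ r : ℝ, ‖-z * Complex.exp (-(z * r))‖ = ‖z‖ * Real.exp (-(z.re * r)) := by
    intro r
    rw [norm_mul, norm_neg, Complex.norm_exp]; simp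
  have hfi : Integrable (Function.uncurry f) (μ.prod (volume.restrict (Ioi 0))) := by
    rw [integrable_prod_iff' hfmeas.aestronglyMeasurable]
    constructor
    · filter_upwards [ae_restrict_mem measurableSet_Ioi] with r hr
      exact (integrableOn_const (C := -z * Complex.exp (-(z * r))) (h r hr).ne
        enorm_ne_top).integrable_indicator measurableSet_Ioi
    · refine (hint.const_mul ‖z‖).congr (Eventually.of_forall fun r => ?_)
      simp only [hf, Function.uncurry, norm_indicator_eq_indicator_norm]
      rw [integral_indicator_const _ measurableSet_Ioi, hnorm, smul_eq_mul]
      ring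
  have hswap := integral_integral_swap hfi
  calc _ = ∫ y, (∫ r in Ioi (0 : ℝ), f y r) ∂μ := by
        refine integral_congr_ae ?_
        filter_upwards [hae] with y hy
        have e : ∀ r ∈ Ioi (0 : ℝ), f y r
            = (Iio y).indicator (fun r : ℝ => -z * Complex.exp (-(z * r))) r := by
          intro r _
          simp [hf, indicator]
        rw [setIntegral_congr_fun measurableSet_Ioi e, setIntegral_indicator measurableSet_Iio,
          Ioi_inter_Iio, ← integral_Ioc_eq_integral_Ioo,
          ← intervalIntegral.integral_of_le hy.le, intervalIntegral.integral_const_mul]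
        simp only [← neg_mul]
        rw [integral_exp_mul_complex (neg_ne_zero.2 hz0)]
        have : -z ≠ 0 := neg_ne_zero.2 hz0
        rw [mul_div_cancel₀ _ this]
        simp
    _ = ∫ r in Ioi (0 : ℝ), (∫ y, f y r ∂μ) := hswap
    _ = _ := by
        rw [← integral_const_mul]
        refine setIntegral_congr_fun measurableSet_Ioi fun r hr => ?_
        simp only [hf]
        rw [integral_indicator_const _ measurableSet_Ioi, Complex.real_smul]
        ring

/-! ### Passage to the boundary -/

/-- Layer-cake: `min 1 y` is integrable because the tail is integrable near `0`. -/
theorem integrable_min_one {μ : Measure ℝ} (h0 : μ (Iic 0) = 0) {M α : ℝ} (hα1 : α < 1)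
    (h : ∀ r : ℝ, 0 < r → μ (Ioi r) ≤ ENNReal.ofReal (r ^ (-α) * M)) :
    Integrable (fun y : ℝ => min 1 y) μ := by
  have hae : ∀ᵐ y ∂μ, 0 < y := by
    rw [ae_iff]; simpa [Iic] using h0
  have hnn : 0 ≤ᵐ[μ] fun y : ℝ => min 1 y := by
    filter_upwards [hae] with y hy
    exact le_min zero_le_one hy.le
  refine ⟨by fun_prop, ?_⟩
  rw [hasFiniteIntegral_iff_ofReal hnn, lintegral_eq_lintegral_meas_lt μ hnn (by fun_prop)]
  have hI : IntegrableOn (fun r : ℝ => r ^ (-α) * M) (Ioc 0 1) := by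
    have := intervalIntegral.intervalIntegrable_rpow' (a := 0) (b := 1) (r := -α) (by linarith)
    rw [intervalIntegrable_iff_integrableOn_Ioc_of_le zero_le_one] at this
    exact this.mul_const M
  calc ∫⁻ t in Ioi (0 : ℝ), μ {a | t < min 1 a}
      ≤ ∫⁻ t in Ioi (0 : ℝ), (Ioc (0 : ℝ) 1).indicator
          (fun r => ENNReal.ofReal (r ^ (-α) * M)) t := by
        refine setLIntegral_mono' measurableSet_Ioi fun t ht => ?_
        by_cases h1 : t ≤ 1
        · rw [indicator_of_mem (show t ∈ Ioc (0 : ℝ) 1 from ⟨ht, h1⟩)]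
          refine (measure_mono fun a ha => ?_).trans (h t ht)
          have ha : t < min 1 a := ha
          exact (lt_min_iff.1 ha).2
        · have : {a : ℝ | t < min 1 a} = ∅ := by
            ext a
            simp only [mem_ofPred_eq, lt_min_iff, mem_empty_iff_false, iff_false, not_and]
            intro h2
            exact absurd h2.le h1
          rw [this, measure_empty]
          exact zero_le
    _ = ∫⁻ t in Ioc (0 : ℝ) 1, ENNReal.ofReal (t ^ (-α) * M) := by
        rw [setLIntegral_indicator measurableSet_Ioc]
        congr 2
        exact inter_eq_left.2 Ioc_subset_Ioi_self
    _ < ⊤ := hI.lintegral_lt_top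

theorem norm_exp_sub_one_le_min {z : ℂ} (hz : 0 ≤ z.re) {R y : ℝ} (hR : 1 ≤ R) (hzR : ‖z‖ ≤ R)
    (hy : 0 < y) : ‖Complex.exp (-(z * y)) - 1‖ ≤ 2 * R * min 1 y := by
  have hn : ‖-(z * (y : ℂ))‖ = ‖z‖ * y := by
    rw [norm_neg, norm_mul, Complex.norm_of_nonneg hy.le]
  have h2 : ‖Complex.exp (-(z * y)) - 1‖ ≤ 2 := by
    have he : ‖Complex.exp (-(z * y))‖ ≤ 1 := by
      rw [Complex.norm_exp, Real.exp_le_one_iff]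
      simp only [Complex.neg_re, Complex.mul_re, Complex.ofReal_re, Complex.ofReal_im, mul_zero,
        sub_zero]
      linarith [mul_nonneg hz hy.le]
    calc _ ≤ ‖Complex.exp (-(z * y))‖ + ‖(1 : ℂ)‖ := norm_sub_le _ _
      _ ≤ 2 := by rw [norm_one]; linarith
  have hzy : ‖z‖ * y ≤ R * y := by gcongr
  rcases le_total 1 y with h | h
  · rw [min_eq_left h]; linarith
  · rw [min_eq_right h]
    rcases le_total (‖z‖ * y) 1 with h1 | h1
    · have := Complex.norm_exp_sub_one_le (x := -(z * y)) (by rw [hn]; exact h1)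
      rw [hn] at this
      linarith
    · linarith

theorem stmt4 (c α : ℝ) (hc : 1 < c) (hα : α ∈ Set.Ioo (0 : ℝ) 1)
    (θ : ℝ → ℝ) (cfs : ℤ → ℂ) (hθ : IsSmoothAdmissible c α θ cfs)
    (ctil : ℝ) (hctil : ctil = 2 * Real.pi * α / Real.log c)
    (φ₁ : Measure ℝ)
    (hφ : ∀ r : ℝ, 0 < r → φ₁ (Set.Ioi r) = ENNReal.ofReal (r ^ (-α) * θ (Real.log r)))
    (hφ0 : φ₁ (Set.Iic 0) = 0) (x : ℝ) :
    Summable (fun k : ℤ =>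
      ‖cfs k * Complex.Gamma (Complex.I * (k : ℂ) * (ctil : ℂ) - (α : ℂ) + 1) *
        (-Complex.I * (x : ℂ)) ^ ((α : ℂ) - Complex.I * (k : ℂ) * (ctil : ℂ))‖) ∧
    ∫ y, (Complex.exp (Complex.I * (x : ℂ) * (y : ℂ)) - 1) ∂φ₁
      = -∑' k : ℤ, cfs k * Complex.Gamma (Complex.I * (k : ℂ) * (ctil : ℂ) - (α : ℂ) + 1) *
          (-Complex.I * (x : ℂ)) ^ ((α : ℂ) - Complex.I * (k : ℂ) * (ctil : ℂ)) := by
  obtain ⟨⟨hpos, -, -⟩, hcont, -, ⟨C, hC0, hC⟩, hsum, hser⟩ := hθ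
  obtain ⟨hα0, hα1⟩ := hα
  rw [← hctil] at hser
  have hB := summable_majorant (ctil := ctil) hα0 hα1 cfs hC0 hC
  rcases eq_or_ne x 0 with rfl | hx
  · have h0 : ∀ k : ℤ, (-Complex.I * ((0 : ℝ) : ℂ)) ^
        ((α : ℂ) - Complex.I * (k : ℂ) * (ctil : ℂ)) = 0 := by
      intro k
      rw [Complex.ofReal_zero, mul_zero, Complex.zero_cpow]
      intro h
      have := congrArg Complex.re h
      simp at this
      exact hα0.ne' this
    simp only [h0]
    simp
  have hx0 : -Complex.I * (x : ℂ) ≠ 0 := by simpa using hx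
  refine ⟨Summable.of_nonneg_of_le (fun _ => norm_nonneg _)
    (fun k => norm_term_le (cfs k) k hx0 (by simp)) (hB.mul_left _), ?_⟩
  have hM : ∀ u, θ u ≤ ∑' k : ℤ, ‖cfs k‖ := by
    intro u
    have hn : ∀ k : ℤ, ‖cfs k * Complex.exp (Complex.I * (k : ℂ) * (ctil : ℂ) * (u : ℂ))‖
        = ‖cfs k‖ := by
      intro k
      rw [norm_mul, Complex.norm_exp]
      simp
    have := norm_tsum_le_tsum_norm (f := fun k : ℤ =>
      cfs k * Complex.exp (Complex.I * (k : ℂ) * (ctil : ℂ) * (u : ℂ))) (by simpa only [hn])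
    rw [(hser u).tsum_eq, Complex.norm_of_nonneg (hpos u).le] at this
    simpa only [hn] using this
  set M := ∑' k : ℤ, ‖cfs k‖ with hMdef
  have htop : ∀ r : ℝ, 0 < r → φ₁ (Ioi r) < ⊤ := by
    intro r hr; rw [hφ r hr]; exact ENNReal.ofReal_lt_top
  have hreal : ∀ r : ℝ, 0 < r → φ₁.real (Ioi r) = r ^ (-α) * θ (Real.log r) := by
    intro r hr
    rw [Measure.real, hφ r hr, ENNReal.toReal_ofReal]
    exact mul_nonneg (Real.rpow_nonneg hr.le _) (hpos _).le
  have hae : ∀ᵐ y ∂φ₁, 0 < y := by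
    rw [ae_iff]; simpa [Iic] using hφ0
  have hmin : Integrable (fun y : ℝ => min 1 y) φ₁ := by
    refine integrable_min_one hφ0 (M := M) hα1 fun r hr => ?_
    rw [hφ r hr]
    have := hM (Real.log r)
    gcongr
  have hlap : ∀ b : ℝ, 0 < b →
      IntegrableOn (fun r : ℝ => φ₁.real (Ioi r) * Real.exp (-(b * r))) (Ioi 0) := by
    intro b hb
    have hmaj : IntegrableOn (fun r : ℝ => M * (r ^ (1 - α - 1) * Real.exp (-(b * r)))) (Ioi 0) :=
      (integrableOn_rpow_exp (by linarith) hb).const_mul M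
    refine hmaj.mono' ?_ ?_
    · have hanti : Antitone fun r : ℝ => φ₁ (Ioi r) :=
        fun r s hrs => measure_mono (Ioi_subset_Ioi hrs)
      exact (hanti.measurable.ennreal_toReal.mul (by fun_prop)).aestronglyMeasurable
    · filter_upwards [ae_restrict_mem measurableSet_Ioi] with r hr
      have hr : 0 < r := hr
      rw [Real.norm_of_nonneg (mul_nonneg measureReal_nonneg (Real.exp_pos _).le), hreal r hr,
        show 1 - α - 1 = -α by ring, ← mul_assoc, mul_comm M]
      have := hM (Real.log r)
      gcongr
  -- the claimed identity with `-I * x` replaced by `z` in the open right half-plane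
  have hreg : ∀ z : ℂ, 0 < z.re → ∫ y, (Complex.exp (-(z * y)) - 1) ∂φ₁
      = -∑' k : ℤ, cfs k * Complex.Gamma (Complex.I * (k : ℂ) * (ctil : ℂ) - (α : ℂ) + 1) *
          z ^ ((α : ℂ) - Complex.I * (k : ℂ) * (ctil : ℂ)) := by
    intro z hz
    have hz0 : z ≠ 0 := by rintro rfl; simp at hz
    have e : ∀ r ∈ Ioi (0 : ℝ), (φ₁.real (Ioi r) : ℂ) * Complex.exp (-(z * r))
        = ((r ^ (-α) * θ (Real.log r) : ℝ) : ℂ) * Complex.exp (-(z * r)) := by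
      intro r hr; rw [hreal r hr]
    rw [integral_exp_sub_one hφ0 htop hz (hlap _ hz), setIntegral_congr_fun measurableSet_Ioi e,
      integral_tail_exp hα1 hsum hser hz, neg_mul, mul_inv_cancel_left₀ hz0]
  -- approach the boundary point `-I * x` along `-I * x + ε`
  have hzt : Tendsto (fun ε : ℝ => -Complex.I * (x : ℂ) + ε) (nhdsWithin 0 (Ioi 0))
      (nhds (-Complex.I * (x : ℂ))) := by
    have : Tendsto (fun ε : ℝ => -Complex.I * (x : ℂ) + ε) (nhds 0)
        (nhds (-Complex.I * (x : ℂ) + (0 : ℝ))) := Continuous.tendsto (by fun_prop) _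
    simpa using this.mono_left nhdsWithin_le_nhds
  have hre : ∀ ε : ℝ, (-Complex.I * (x : ℂ) + ε).re = ε := by intro ε; simp
  have hnear : ∀ᶠ ε : ℝ in nhdsWithin 0 (Ioi 0),
      0 < ε ∧ ‖-Complex.I * (x : ℂ) + ε‖ ≤ 1 + |x| := by
    filter_upwards [self_mem_nhdsWithin, hzt.norm.eventually_le_const
      (show ‖-Complex.I * (x : ℂ)‖ < 1 + |x| by simp)] with ε h1 h2
    exact ⟨h1, h2⟩
  have hL : Tendsto (fun ε : ℝ => ∫ y, (Complex.exp (-((-Complex.I * (x : ℂ) + ε) * y)) - 1) ∂φ₁)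
      (nhdsWithin 0 (Ioi 0))
      (nhds (∫ y, (Complex.exp (-((-Complex.I * (x : ℂ)) * y)) - 1) ∂φ₁)) := by
    refine tendsto_integral_filter_of_dominated_convergence (fun y => 2 * (1 + |x|) * min 1 y)
      ?_ ?_ (hmin.const_mul _) ?_
    · exact Eventually.of_forall fun ε => Continuous.aestronglyMeasurable (by fun_prop)
    · filter_upwards [hnear] with ε hε
      filter_upwards [hae] with y hy
      exact norm_exp_sub_one_le_min (by rw [hre]; exact hε.1.le)
        (by linarith [abs_nonneg x]) hε.2 hy
    · exact Eventually.of_forall fun y =>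
        ((hzt.mul_const (y : ℂ)).neg.cexp).sub_const 1
  have hR : Tendsto (fun ε : ℝ => ∑' k : ℤ,
        cfs k * Complex.Gamma (Complex.I * (k : ℂ) * (ctil : ℂ) - (α : ℂ) + 1) *
          (-Complex.I * (x : ℂ) + ε) ^ ((α : ℂ) - Complex.I * (k : ℂ) * (ctil : ℂ)))
      (nhdsWithin 0 (Ioi 0))
      (nhds (∑' k : ℤ,
        cfs k * Complex.Gamma (Complex.I * (k : ℂ) * (ctil : ℂ) - (α : ℂ) + 1) *
          (-Complex.I * (x : ℂ)) ^ ((α : ℂ) - Complex.I * (k : ℂ) * (ctil : ℂ)))) := by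
    refine tendsto_tsum_of_dominated_convergence (hB.mul_left ((1 + |x|) ^ α)) ?_ ?_
    · intro k
      refine Tendsto.const_mul _ ?_
      have hc : ContinuousAt (fun z : ℂ => z ^ ((α : ℂ) - Complex.I * (k : ℂ) * (ctil : ℂ)))
          (-Complex.I * (x : ℂ)) :=
        continuousAt_id.cpow continuousAt_const (Or.inr (by simpa using hx))
      exact hc.tendsto.comp hzt
    · filter_upwards [hnear] with ε hε k
      have hz0 : -Complex.I * (x : ℂ) + ε ≠ 0 := by
        intro h
        have := congrArg Complex.re h
        rw [hre] at this
        exact hε.1.ne' this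
      refine (norm_term_le (cfs k) k hz0 (by rw [hre]; exact hε.1.le)).trans ?_
      gcongr
      exact hε.2
  have hfin := tendsto_nhds_unique (hL.congr' (by
    filter_upwards [hnear] with ε hε
    exact hreg _ (by rw [hre]; exact hε.1))) hR.neg
  rw [← hfin]
  congr 1
  ext y
  congr 2
  ring
end
end

section
/- Let c > 1, α = 1, and let θ be a smooth admissible function with respect to c and α = 1 with Fourier coefficients (c_k)_{k∈ℤ} and c̃ = 2π/log c. Let φ₁ be the measure on (0,∞) with φ₁((r,∞)) = r^{−1} θ(log r) for all r > 0. Then for every x ∈ ℝ one has ∫₀^∞ (e^{ixy} − 1 − ix sin y) dφ₁(y) = −∑_{k∈ℤ, k≠0} c_k Γ(i k c̃) ( (−ix)^{1 − i k c̃} + ix cos(π i k c̃ / 2) ) − c₀ ix log(−ix), where Γ is the complex Gamma function, complex powers and logarithms are taken with the principal branch, and 0·log 0 := 0. -/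
/-!
The integrand is `g(y) = e^(ixy) - 1 - ix sin y`, the primitive vanishing at `0` of
`ix k(t)` with `k(t) = e^(ixt) - cos t`. Formally, Fubini's theorem and the tail formula
`φ₁(t, ∞) = θ(log t) / t` give

  `∫ g dφ₁ = ix ∫₀^∞ k(t) θ(log t) / t dt = ix ∑ c_k ∫₀^∞ k(t) t^(ikc̃ - 1) dt`,

and Euler's integral `∫₀^∞ t^(s-1) e^(-at) dt = a^(-s) Γ(s)` evaluates the terms. The last integrals
converge only conditionally at infinity and have exponents on the imaginary axis, so the kernel is
regularised to `k_ε(t) = e^(-εt) k(t)`.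

* For `ε > 0` Fubini and termwise integration are absolutely convergent (`integral_regPrim_eq`,
  `hasSum_mellin_regKernel`). Since `k_ε(t) = O(t)` at `0`, its Mellin transform is continuous up to
  `Re s = 0` and can be computed there as a limit from `Re s > 0` (`mellin_regKernel`); at `s = 0`
  this limit is a derivative and produces the logarithm.
* As `ε → 0`, the primitives of `k_ε` are dominated by a multiple of `min (y², 1)`
  (`norm_regPrim_le`), which is `φ₁`-integrable (`integrable_min_sq`). So the integrals converge to
  the integral of the primitive of `k`.
* As `ε → 0`, the series converges termwise and is dominated by a multiple of `∑ |c_k|`: the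
  reflection formula gives `|Γ(iτ)| = (π / (|τ| sinh(π|τ|)))^(1/2)`, which compensates
  `|a^(-iτ)| ≤ e^(π|τ|/2)` for `Re a ≥ 0` (`exists_bound_Gamma_mul_cpow`).
-/

open MeasureTheory Real Filter Set Complex

noncomputable section

/-! ### Euler's integral and the size of the Gamma function on the imaginary axis -/

lemma integrableOn_cpow_mul_exp {a r : ℂ} (ha : 0 < a.re) (hr : 0 < r.re) :
    IntegrableOn (fun t : ℝ => (t : ℂ) ^ (a - 1) * Complex.exp (-(r * t))) (Ioi 0) := by
  have h := integrableOn_rpow_mul_exp_neg_mul_rpow (p := 1) (s := a.re - 1) (b := r.re)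
    (by linarith) one_pos hr
  refine Integrable.mono' h ?_ ?_
  · refine ContinuousOn.aestronglyMeasurable (fun t ht => ?_) measurableSet_Ioi
    refine ContinuousAt.continuousWithinAt (ContinuousAt.mul ?_ (by fun_prop))
    exact Complex.continuousAt_ofReal_cpow_const _ _ (Or.inr (ne_of_gt ht))
  · refine (ae_restrict_iff' measurableSet_Ioi).2 (Eventually.of_forall fun t ht => ?_)
    rw [norm_mul, Complex.norm_cpow_eq_rpow_re_of_pos ht, Complex.norm_exp]
    simp

/-- Euler's integral `∫₀^∞ t^(a-1) e^(-rt) dt = r^(-a) Γ(a)` for complex `r` with `Re r > 0`: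
both sides are holomorphic in `r`, and they agree for real `r`. -/
lemma integral_cpow_mul_exp {a r : ℂ} (ha : 0 < a.re) (hr : 0 < r.re) :
    ∫ t : ℝ in Ioi 0, (t : ℂ) ^ (a - 1) * Complex.exp (-(r * t)) =
      r ^ (-a) * Complex.Gamma a := by
  set U : Set ℂ := {z | 0 < z.re} with hU
  have hUo : IsOpen U := isOpen_lt continuous_const Complex.continuous_re
  have hF : DifferentiableOn ℂ
      (fun r : ℂ => ∫ t : ℝ in Ioi 0, (t : ℂ) ^ (a - 1) * Complex.exp (-(r * t))) U := by
    intro r hr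
    have hr' : 0 < r.re := hr
    have hmem : ∀ z ∈ Metric.ball r (r.re / 2), r.re / 2 < z.re := by
      intro z hz
      have h1 := Complex.abs_re_le_norm (z - r)
      rw [Metric.mem_ball, dist_eq_norm] at hz
      rw [Complex.sub_re] at h1
      linarith [(abs_le.1 (h1.trans hz.le)).1, (abs_lt.1 (h1.trans_lt hz)).1]
    have h := (hasDerivAt_integral_of_dominated_loc_of_deriv_le (𝕜 := ℂ)
      (μ := volume.restrict (Ioi 0))
      (F := fun (r : ℂ) (t : ℝ) => (t : ℂ) ^ (a - 1) * Complex.exp (-(r * t)))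
      (F' := fun (r : ℂ) (t : ℝ) => (t : ℂ) ^ (a - 1) * (Complex.exp (-(r * t)) * (-t)))
      (x₀ := r) (bound := fun t => t ^ a.re * Real.exp (-(r.re / 2) * t ^ (1 : ℝ)))
      (Metric.ball_mem_nhds r (half_pos hr')) ?_ (integrableOn_cpow_mul_exp ha hr')
      ?_ ?_ ?_ ?_).2
    · exact h.differentiableAt.differentiableWithinAt
    · filter_upwards [Metric.ball_mem_nhds r (half_pos hr')] with z hz
      exact (integrableOn_cpow_mul_exp ha ((half_pos hr').trans (hmem z hz))).aestronglyMeasurable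
    · refine ContinuousOn.aestronglyMeasurable (fun t ht => ?_) measurableSet_Ioi
      refine ContinuousAt.continuousWithinAt (ContinuousAt.mul ?_ (by fun_prop))
      exact Complex.continuousAt_ofReal_cpow_const _ _ (Or.inr (ne_of_gt ht))
    · refine (ae_restrict_iff' measurableSet_Ioi).2 (Eventually.of_forall fun t ht z hz => ?_)
      have ht' : (0 : ℝ) < t := ht
      rw [norm_mul, norm_mul, Complex.norm_cpow_eq_rpow_re_of_pos ht, Complex.norm_exp]
      have e : (-(z * (t : ℂ))).re = -(z.re * t) := by simp
      rw [e, norm_neg, Complex.norm_of_nonneg ht'.le, Complex.sub_re, Complex.one_re,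
        Real.rpow_sub_one ht'.ne', Real.rpow_one]
      have : Real.exp (-(z.re * t)) ≤ Real.exp (-(r.re / 2) * t) := by
        apply Real.exp_le_exp.2
        nlinarith [hmem z hz]
      calc t ^ a.re / t * (Real.exp (-(z.re * t)) * t) = t ^ a.re * Real.exp (-(z.re * t)) := by
            field_simp
        _ ≤ _ := by gcongr
    · exact integrableOn_rpow_mul_exp_neg_mul_rpow (by linarith) one_pos (half_pos hr')
    · refine Eventually.of_forall fun t z _ => ?_
      have h1 : HasDerivAt (fun z : ℂ => -(z * (t : ℂ))) (-(t : ℂ)) z := by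
        simpa using ((hasDerivAt_id z).mul_const (t : ℂ)).fun_neg
      exact h1.cexp.const_mul _
  have hG : DifferentiableOn ℂ (fun r : ℂ => r ^ (-a) * Complex.Gamma a) U := by
    intro r hr
    refine (DifferentiableAt.mul_const ?_ _).differentiableWithinAt
    exact (hasStrictDerivAt_cpow_const (Or.inl hr)).hasDerivAt.differentiableAt
  have hpre : IsPreconnected U := (convex_halfSpace_re_gt 0).isPreconnected
  refine (hF.analyticOnNhd hUo).eqOn_of_preconnected_of_frequently_eq (hG.analyticOnNhd hUo)
    hpre (z₀ := 1) (by simp [hU]) ?_ hr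
  -- the reals accumulate at `1`
  have ht : Tendsto (fun x : ℝ => (x : ℂ)) (nhdsWithin 1 {1}ᶜ) (nhdsWithin (1 : ℂ) {1}ᶜ) := by
    refine tendsto_nhdsWithin_iff.2 ⟨?_, ?_⟩
    · exact (by simpa using Complex.continuous_ofReal.tendsto (1 : ℝ) :
        Tendsto (fun x : ℝ => (x : ℂ)) (nhds 1) (nhds 1)).mono_left nhdsWithin_le_nhds
    · filter_upwards [self_mem_nhdsWithin] with x hx
      simpa using hx
  refine ht.frequently (Eventually.frequently ?_)
  filter_upwards [nhdsWithin_le_nhds (lt_mem_nhds (zero_lt_one' ℝ))] with x hx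
  rw [Complex.integral_cpow_mul_exp_neg_mul_Ioi ha hx, one_div, Complex.inv_cpow,
    Complex.cpow_neg]
  rw [Complex.arg_ofReal_of_nonneg hx.le]
  exact Real.pi_pos.ne

/-- The reflection formula on the imaginary axis, where `Γ(-iτ)` is the conjugate of `Γ(iτ)`. -/
lemma norm_Gamma_imag_sq {τ : ℝ} (hτ : τ ≠ 0) :
    ‖Complex.Gamma (Complex.I * τ)‖ ^ 2 * (|τ| * Real.sinh (Real.pi * |τ|)) = Real.pi := by
  have h := Complex.Gamma_mul_Gamma_one_sub (Complex.I * τ)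
  have h2 : Complex.Gamma (1 - Complex.I * τ) =
      -(Complex.I * τ) * (starRingEnd ℂ) (Complex.Gamma (Complex.I * τ)) := by
    rw [← Complex.Gamma_conj, sub_eq_neg_add, Complex.Gamma_add_one _ (by simpa using hτ)]
    simp
  have h3 : Complex.sin (Real.pi * (Complex.I * τ)) = (Real.sinh (Real.pi * τ) : ℂ) * Complex.I := by
    rw [show (Real.pi : ℂ) * (Complex.I * τ) = (Real.pi * τ) * Complex.I by ring,
      Complex.sin_mul_I]
    simp
  rw [h2, h3] at h
  have hs : Real.sinh (Real.pi * τ) ≠ 0 := by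
    simpa [Real.pi_ne_zero] using hτ
  have h4 := congrArg norm h
  have habs : |Real.sinh (Real.pi * τ)| = Real.sinh (Real.pi * |τ|) := by
    rw [Real.abs_sinh, abs_mul, abs_of_pos Real.pi_pos]
  simp only [norm_mul, norm_neg, Complex.norm_I, one_mul, norm_div, Complex.norm_real,
    RCLike.norm_conj, Real.norm_eq_abs, mul_one, habs, abs_of_pos Real.pi_pos] at h4
  have hs' : Real.sinh (Real.pi * |τ|) ≠ 0 := by rw [← habs]; exact abs_ne_zero.2 hs
  rw [eq_div_iff hs'] at h4
  linarith

/-- The decay of `Γ` on the imaginary axis beats the growth of `a ^ (-iτ)` for `a` in the closed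
right half-plane, uniformly in `a`. -/
lemma exists_bound_Gamma_mul_cpow {τ₀ : ℝ} (hτ₀ : 0 < τ₀) :
    ∃ B : ℝ, 0 ≤ B ∧ ∀ τ : ℝ, τ₀ ≤ |τ| → ∀ a : ℂ, a ≠ 0 → 0 ≤ a.re →
      ‖Complex.Gamma (Complex.I * τ) * a ^ (-(Complex.I * τ))‖ ≤ B := by
  set u₀ := Real.pi * τ₀
  have hu₀ : 0 < u₀ := mul_pos Real.pi_pos hτ₀
  set q := Real.exp (-(2 * u₀))
  have hq : q < 1 := by simpa [q] using hu₀
  refine ⟨Real.sqrt (Real.pi * (2 / (1 - q)) / τ₀), Real.sqrt_nonneg _, ?_⟩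
  intro τ hτ a ha hre
  have hτpos : 0 < |τ| := hτ₀.trans_le hτ
  have hτ0 : τ ≠ 0 := abs_pos.1 hτpos
  set u := Real.pi * |τ|
  have hu : u₀ ≤ u := mul_le_mul_of_nonneg_left hτ Real.pi_pos.le
  have hsinh : Real.exp u ≤ 2 / (1 - q) * Real.sinh u := by
    rw [div_mul_eq_mul_div, le_div_iff₀ (by linarith), Real.sinh_eq]
    have : Real.exp (-u) ≤ Real.exp u * q := by
      rw [← Real.exp_add]
      exact Real.exp_le_exp.2 (by linarith)
    linarith
  have hnorm : ‖a ^ (-(Complex.I * τ))‖ ≤ Real.exp (u / 2) := by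
    rw [Complex.norm_cpow_of_ne_zero ha]
    have harg := Complex.abs_arg_le_pi_div_two_iff.2 hre
    have h1 : (-(Complex.I * (τ : ℂ))).re = 0 := by simp
    have h2 : (-(Complex.I * (τ : ℂ))).im = -τ := by simp
    rw [h1, h2, Real.rpow_zero, one_div, ← Real.exp_neg]
    apply Real.exp_le_exp.2
    calc -(a.arg * -τ) = a.arg * τ := by ring
      _ ≤ |a.arg * τ| := le_abs_self _
      _ = |a.arg| * |τ| := abs_mul _ _
      _ ≤ Real.pi / 2 * |τ| := by gcongr
      _ = u / 2 := by simp only [u]; ring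
  have hG := norm_Gamma_imag_sq hτ0
  rw [norm_mul]
  apply Real.le_sqrt_of_sq_le
  rw [le_div_iff₀ hτ₀]
  have hexp : Real.exp (u / 2) ^ 2 = Real.exp u := by rw [← Real.exp_nat_mul]; congr 1; push_cast; ring
  have hc : 0 ≤ 2 / (1 - q) := div_nonneg zero_le_two (by linarith)
  calc (‖Complex.Gamma (Complex.I * τ)‖ * ‖a ^ (-(Complex.I * τ))‖) ^ 2 * τ₀
      ≤ (‖Complex.Gamma (Complex.I * τ)‖ * Real.exp (u / 2)) ^ 2 * |τ| := by gcongr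
    _ = ‖Complex.Gamma (Complex.I * τ)‖ ^ 2 * |τ| * Real.exp u := by rw [mul_pow, hexp]; ring
    _ ≤ ‖Complex.Gamma (Complex.I * τ)‖ ^ 2 * |τ| * (2 / (1 - q) * Real.sinh u) := by gcongr
    _ = (‖Complex.Gamma (Complex.I * τ)‖ ^ 2 * (|τ| * Real.sinh u)) * (2 / (1 - q)) := by ring
    _ = Real.pi * (2 / (1 - q)) := by rw [hG]

/-! ### The regularised kernel and its Mellin transform -/

/-- The regularised kernel `e^(-εt) (e^(ixt) - cos t)`, written as a combination of exponentials
`e^(-at)` so that its Mellin transform can be read off from Euler's integral. -/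
def regKernel (x ε t : ℝ) : ℂ :=
  Complex.exp (-(((ε : ℂ) - x * Complex.I) * t))
    - 1 / 2 * Complex.exp (-(((ε : ℂ) - Complex.I) * t))
    - 1 / 2 * Complex.exp (-(((ε : ℂ) + Complex.I) * t))

/-- The Mellin transform of `regKernel x ε` at `s ≠ 0`, and its limiting value at `s = 0`. -/
def mellinValue (x ε : ℝ) (s : ℂ) : ℂ :=
  if s = 0 then
    -Complex.log ((ε : ℂ) - x * Complex.I) + 1 / 2 * Complex.log ((ε : ℂ) - Complex.I)
      + 1 / 2 * Complex.log ((ε : ℂ) + Complex.I)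
  else Complex.Gamma s * (((ε : ℂ) - x * Complex.I) ^ (-s)
    - 1 / 2 * ((ε : ℂ) - Complex.I) ^ (-s) - 1 / 2 * ((ε : ℂ) + Complex.I) ^ (-s))

lemma regKernel_eq (x ε t : ℝ) :
    regKernel x ε t =
      Real.exp (-(ε * t)) * ((Complex.exp (Complex.I * (x * t : ℝ)) - 1) + (1 - Complex.cos t)) := by
  have h1 : Complex.exp (-(((ε : ℂ) - x * Complex.I) * t)) =
      Complex.exp (-(ε * t)) * Complex.exp (Complex.I * (x * t)) := by
    rw [← Complex.exp_add]; congr 1; ring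
  have h2 : Complex.exp (-(((ε : ℂ) - Complex.I) * t)) =
      Complex.exp (-(ε * t)) * Complex.exp (t * Complex.I) := by
    rw [← Complex.exp_add]; congr 1; ring
  have h3 : Complex.exp (-(((ε : ℂ) + Complex.I) * t)) =
      Complex.exp (-(ε * t)) * Complex.exp (-t * Complex.I) := by
    rw [← Complex.exp_add]; congr 1; ring
  rw [regKernel, h1, h2, h3, Complex.cos]
  push_cast
  ring

lemma continuous_regKernel (x ε : ℝ) : Continuous (regKernel x ε) := by
  unfold regKernel
  fun_prop

lemma norm_regKernel_le (x ε : ℝ) {t : ℝ} (ht : 0 ≤ t) :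
    ‖regKernel x ε t‖ ≤ (|x| + 1) * t * Real.exp (-(ε * t)) := by
  rw [regKernel_eq, norm_mul, Complex.norm_of_nonneg (Real.exp_pos _).le, mul_comm]
  gcongr
  have h1 : ‖Complex.exp (Complex.I * (x * t : ℝ)) - 1‖ ≤ |x| * t := by
    refine Real.norm_exp_I_mul_ofReal_sub_one_le.trans ?_
    rw [Real.norm_eq_abs, abs_mul, abs_of_nonneg ht]
  have h2 : ‖1 - Complex.cos t‖ ≤ t := by
    -- `1 - cos t` is minus the real part of `e^(it) - 1`
    have h3 : (1 : ℂ) - Complex.cos t = ((-(Complex.exp (Complex.I * t) - 1).re : ℝ) : ℂ) := by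
      rw [mul_comm, Complex.exp_mul_I, ← Complex.ofReal_cos, ← Complex.ofReal_sin]
      simp
    rw [h3, Complex.norm_real, Real.norm_eq_abs, abs_neg]
    refine (Complex.abs_re_le_norm _).trans (Real.norm_exp_I_mul_ofReal_sub_one_le.trans ?_)
    rw [Real.norm_eq_abs, abs_of_nonneg ht]
  calc _ ≤ _ := norm_add_le _ _
    _ ≤ |x| * t + t := add_le_add h1 h2
    _ = _ := by ring

lemma mellin_regKernel_of_re_pos {x ε : ℝ} (hε : 0 < ε) {s : ℂ} (hs : 0 < s.re) :
    ∫ t : ℝ in Ioi 0, regKernel x ε t * (t : ℂ) ^ (s - 1) =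
      Complex.Gamma s * (((ε : ℂ) - x * Complex.I) ^ (-s)
        - 1 / 2 * ((ε : ℂ) - Complex.I) ^ (-s) - 1 / 2 * ((ε : ℂ) + Complex.I) ^ (-s)) := by
  have hA : 0 < ((ε : ℂ) - x * Complex.I).re := by simpa using hε
  have hB : 0 < ((ε : ℂ) - Complex.I).re := by simpa using hε
  have hB' : 0 < ((ε : ℂ) + Complex.I).re := by simpa using hε
  have e : ∀ t : ℝ, regKernel x ε t * (t : ℂ) ^ (s - 1) =
      (t : ℂ) ^ (s - 1) * Complex.exp (-(((ε : ℂ) - x * Complex.I) * t))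
      - 1 / 2 * ((t : ℂ) ^ (s - 1) * Complex.exp (-(((ε : ℂ) - Complex.I) * t)))
      - 1 / 2 * ((t : ℂ) ^ (s - 1) * Complex.exp (-(((ε : ℂ) + Complex.I) * t))) := by
    intro t; rw [regKernel]; ring
  simp_rw [e]
  rw [integral_sub, integral_sub, integral_const_mul, integral_const_mul,
    integral_cpow_mul_exp hs hA, integral_cpow_mul_exp hs hB, integral_cpow_mul_exp hs hB']
  · ring
  · exact integrableOn_cpow_mul_exp hs hA
  · exact (integrableOn_cpow_mul_exp hs hB).const_mul _
  · exact (integrableOn_cpow_mul_exp hs hA).sub ((integrableOn_cpow_mul_exp hs hB).const_mul _)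
  · exact (integrableOn_cpow_mul_exp hs hB').const_mul _

lemma aestronglyMeasurable_regKernel_mul_cpow (x ε : ℝ) (s : ℂ) :
    AEStronglyMeasurable (fun t : ℝ => regKernel x ε t * (t : ℂ) ^ s)
      (volume.restrict (Ioi 0)) := by
  refine ContinuousOn.aestronglyMeasurable (fun t ht => ?_) measurableSet_Ioi
  refine ContinuousAt.continuousWithinAt
    (ContinuousAt.mul (continuous_regKernel x ε).continuousAt ?_)
  exact Complex.continuousAt_ofReal_cpow_const _ _ (Or.inr (ne_of_gt ht))

/-- The vanishing of the kernel at `0` makes its Mellin transform continuous up to the imaginary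
axis. -/
lemma tendsto_mellin_regKernel {x ε : ℝ} (hε : 0 < ε) {s : ℂ} (hs : s.re = 0) :
    Tendsto (fun δ : ℝ => ∫ t : ℝ in Ioi 0, regKernel x ε t * (t : ℂ) ^ (s + δ - 1))
      (nhdsWithin 0 (Ioi 0))
      (nhds (∫ t : ℝ in Ioi 0, regKernel x ε t * (t : ℂ) ^ (s - 1))) := by
  refine tendsto_integral_filter_of_dominated_convergence
    (fun t => (|x| + 1) * (t ^ (0 : ℝ) * Real.exp (-ε * t ^ (1 : ℝ))
      + t ^ (1 : ℝ) * Real.exp (-ε * t ^ (1 : ℝ)))) ?_ ?_ ?_ ?_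
  · exact Eventually.of_forall fun δ => aestronglyMeasurable_regKernel_mul_cpow _ _ _
  · filter_upwards [Ioo_mem_nhdsGT (zero_lt_one' ℝ)] with δ hδ
    refine (ae_restrict_iff' measurableSet_Ioi).2 (Eventually.of_forall fun t ht => ?_)
    have ht' : (0 : ℝ) < t := ht
    rw [norm_mul, Complex.norm_cpow_eq_rpow_re_of_pos ht']
    have e : (s + δ - 1).re = δ - 1 := by simp [hs]
    rw [e, Real.rpow_zero, Real.rpow_one, one_mul, Real.rpow_sub_one ht'.ne']
    have h1 : t ^ δ ≤ 1 + t := by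
      rcases le_total t 1 with h | h
      · linarith [Real.rpow_le_one ht'.le h hδ.1.le]
      · have := Real.rpow_le_rpow_of_exponent_le h hδ.2.le
        rw [Real.rpow_one] at this
        linarith
    calc ‖regKernel x ε t‖ * (t ^ δ / t)
        ≤ ((|x| + 1) * t * Real.exp (-(ε * t))) * ((1 + t) / t) := by
          gcongr
          exact norm_regKernel_le x ε ht'.le
      _ = _ := by rw [← neg_mul]; field_simp
  · refine Integrable.const_mul (Integrable.add ?_ ?_) _
    · exact integrableOn_rpow_mul_exp_neg_mul_rpow (by norm_num) one_pos hε
    · exact integrableOn_rpow_mul_exp_neg_mul_rpow (by norm_num) one_pos hε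
  · refine (ae_restrict_iff' measurableSet_Ioi).2 (Eventually.of_forall fun t ht => ?_)
    have ht' : (0 : ℝ) < t := ht
    refine Tendsto.const_mul _ ?_
    have hc : Continuous (fun δ : ℝ => (t : ℂ) ^ (s + δ - 1)) :=
      Continuous.const_cpow (by fun_prop) (Or.inl (by exact_mod_cast ht'.ne'))
    have := hc.tendsto 0
    simp only [Complex.ofReal_zero, add_zero] at this
    exact this.mono_left nhdsWithin_le_nhds

/-- The Mellin transform of the regularised kernel on the imaginary axis, as a limit from the right
half-plane. -/
lemma mellin_regKernel {x ε : ℝ} (hε : 0 < ε) {s : ℂ} (hs : s.re = 0) :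
    ∫ t : ℝ in Ioi 0, regKernel x ε t * (t : ℂ) ^ (s - 1) = mellinValue x ε s := by
  refine tendsto_nhds_unique (tendsto_mellin_regKernel hε hs) ?_
  have hA : (ε : ℂ) - x * Complex.I ≠ 0 := fun h => hε.ne' (by simpa using congrArg Complex.re h)
  have hB : (ε : ℂ) - Complex.I ≠ 0 := fun h => hε.ne' (by simpa using congrArg Complex.re h)
  have hB' : (ε : ℂ) + Complex.I ≠ 0 := fun h => hε.ne' (by simpa using congrArg Complex.re h)
  set P : ℂ → ℂ := fun z => ((ε : ℂ) - x * Complex.I) ^ (-z)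
        - 1 / 2 * ((ε : ℂ) - Complex.I) ^ (-z) - 1 / 2 * ((ε : ℂ) + Complex.I) ^ (-z) with hP
  have hcp : ∀ a : ℂ, a ≠ 0 → ∀ z : ℂ,
      HasDerivAt (fun z : ℂ => a ^ (-z)) (-(a ^ (-z) * Complex.log a)) z := by
    intro a ha z
    simpa using ((hasDerivAt_id z).fun_neg).const_cpow (Or.inl ha)
  have hPd : ∀ z, HasDerivAt P (-(((ε : ℂ) - x * Complex.I) ^ (-z)
      * Complex.log ((ε : ℂ) - x * Complex.I))
        - 1 / 2 * -(((ε : ℂ) - Complex.I) ^ (-z) * Complex.log ((ε : ℂ) - Complex.I))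
        - 1 / 2 * -(((ε : ℂ) + Complex.I) ^ (-z) * Complex.log ((ε : ℂ) + Complex.I))) z :=
    fun z => ((hcp _ hA z).sub ((hcp _ hB z).const_mul _)).sub ((hcp _ hB' z).const_mul _)
  have hev : (fun δ : ℝ => Complex.Gamma (s + δ) * P (s + δ)) =ᶠ[nhdsWithin 0 (Ioi 0)]
      fun δ : ℝ => ∫ t : ℝ in Ioi 0, regKernel x ε t * (t : ℂ) ^ (s + δ - 1) := by
    filter_upwards [self_mem_nhdsWithin] with δ hδ
    exact (mellin_regKernel_of_re_pos hε (by simpa [hs] using hδ)).symm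
  refine Tendsto.congr' hev ?_
  have hto : Tendsto (fun δ : ℝ => s + (δ : ℂ)) (nhdsWithin 0 (Ioi 0)) (nhdsWithin s {s}ᶜ) := by
    refine tendsto_nhdsWithin_iff.2 ⟨?_, ?_⟩
    · have : Continuous (fun δ : ℝ => s + (δ : ℂ)) := by fun_prop
      simpa using (this.tendsto 0).mono_left nhdsWithin_le_nhds
    · filter_upwards [self_mem_nhdsWithin] with δ hδ
      simpa using (ne_of_gt hδ : δ ≠ 0)
  by_cases h0 : s = 0
  · subst h0
    rw [mellinValue, if_pos rfl]
    -- `Γ(z) P(z) = (z Γ(z)) * (P(z) / z)`, where `P(0) = 0`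
    have hP0 : P 0 = 0 := by simp only [hP, neg_zero, Complex.cpow_zero]; norm_num
    have hlim := Complex.tendsto_self_mul_Gamma_nhds_zero.mul
      (hasDerivAt_iff_tendsto_slope.1 (hPd 0))
    have hev2 : (fun z => z * Complex.Gamma z * slope P 0 z) =ᶠ[nhdsWithin 0 {0}ᶜ]
        fun z => Complex.Gamma z * P z := by
      filter_upwards [self_mem_nhdsWithin] with z hz
      have hz' : z ≠ 0 := hz
      rw [slope_def_field, hP0, sub_zero, sub_zero]
      field_simp
    convert (hlim.congr' hev2).comp hto using 2
    · rfl
    · simp only [neg_zero, Complex.cpow_zero]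
      ring
  · rw [mellinValue, if_neg h0]
    have hG : DifferentiableAt ℂ Complex.Gamma s := by
      refine Complex.differentiableAt_Gamma s fun m hm => h0 ?_
      have := congrArg Complex.re hm
      rw [hs] at this
      have hm0 : m = 0 := by simpa using this
      simpa [hm0] using hm
    exact ((hG.continuousAt.mul (hPd s).continuousAt).tendsto.mono_left
      nhdsWithin_le_nhds).comp hto

/-- As the regularisation is removed, the Mellin transform at `s` converges to its value for the
unregularised kernel. -/
lemma tendsto_mellinValue {x : ℝ} (hx : x ≠ 0) (s : ℂ) :
    Tendsto (fun ε : ℝ => mellinValue x ε s) (nhdsWithin 0 (Ioi 0))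
      (nhds (mellinValue x 0 s)) := by
  refine Tendsto.mono_left ?_ nhdsWithin_le_nhds
  have hA : ((0 : ℝ) : ℂ) - x * Complex.I ∈ Complex.slitPlane := by
    simp [Complex.mem_slitPlane_iff, hx]
  have hB : ((0 : ℝ) : ℂ) - Complex.I ∈ Complex.slitPlane := by
    simp [Complex.mem_slitPlane_iff]
  have hB' : ((0 : ℝ) : ℂ) + Complex.I ∈ Complex.slitPlane := by
    simp [Complex.mem_slitPlane_iff]
  have cA : ContinuousAt (fun ε : ℝ => (ε : ℂ) - x * Complex.I) 0 := by fun_prop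
  have cB : ContinuousAt (fun ε : ℝ => (ε : ℂ) - Complex.I) 0 := by fun_prop
  have cB' : ContinuousAt (fun ε : ℝ => (ε : ℂ) + Complex.I) 0 := by fun_prop
  change ContinuousAt (fun ε : ℝ => mellinValue x ε s) 0
  unfold mellinValue
  split_ifs
  · exact ((cA.clog hA).neg.add ((cB.clog hB).const_mul _)).add ((cB'.clog hB').const_mul _)
  · exact continuousAt_const.mul (((cA.cpow continuousAt_const hA).sub
      ((cB.cpow continuousAt_const hB).const_mul _)).sub
      ((cB'.cpow continuousAt_const hB').const_mul _))

/-- For `ε = 0` the logarithms of `-i` and `i` cancel. -/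
lemma mellinValue_zero_zero (x : ℝ) :
    mellinValue x 0 0 = -Complex.log (-Complex.I * x) := by
  rw [mellinValue, if_pos rfl]
  simp only [Complex.ofReal_zero, zero_sub, zero_add, Complex.log_neg_I, Complex.log_I]
  rw [mul_comm (x : ℂ), neg_mul]
  ring_nf

/-- For `ε = 0` the powers of `-i` and `i` combine to the cosine. -/
lemma I_mul_mellinValue_zero {x : ℝ} (hx : x ≠ 0) {s : ℂ} (hs : s ≠ 0) :
    Complex.I * x * mellinValue x 0 s = -(Complex.Gamma s *
      ((-Complex.I * x) ^ ((1 : ℂ) - s) + Complex.I * x * Complex.cos ((Real.pi : ℂ) / 2 * s))) := by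
  have hne : -Complex.I * (x : ℂ) ≠ 0 := by simpa using hx
  rw [mellinValue, if_neg hs]
  simp only [Complex.ofReal_zero, zero_sub, zero_add]
  rw [mul_comm (x : ℂ), ← neg_mul, sub_eq_add_neg (1 : ℂ) s, Complex.cpow_add _ _ hne,
    Complex.cpow_one, Complex.cpow_def_of_ne_zero (neg_ne_zero.2 Complex.I_ne_zero),
    Complex.cpow_def_of_ne_zero Complex.I_ne_zero, Complex.log_neg_I, Complex.log_I, Complex.cos]
  rw [show -(Real.pi / 2 : ℂ) * Complex.I * -s = Real.pi / 2 * s * Complex.I by ring,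
    show (Real.pi / 2 : ℂ) * Complex.I * -s = -(Real.pi / 2 * s) * Complex.I by ring]
  ring_nf

/-- Bound, uniform in `ε`, that dominates the Mellin transforms of the regularised kernels away from
`s = 0`. -/
lemma exists_bound_mellinValue {τ₀ : ℝ} (hτ₀ : 0 < τ₀) (x : ℝ) :
    ∃ B : ℝ, 0 ≤ B ∧ ∀ τ : ℝ, τ₀ ≤ |τ| → ∀ ε : ℝ, 0 < ε →
      ‖mellinValue x ε (Complex.I * τ)‖ ≤ B := by
  obtain ⟨B, hB0, hB⟩ := exists_bound_Gamma_mul_cpow hτ₀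
  refine ⟨2 * B, by positivity, fun τ hτ ε hε => ?_⟩
  have hτ0 : τ ≠ 0 := abs_pos.1 (hτ₀.trans_le hτ)
  have hs : Complex.I * (τ : ℂ) ≠ 0 := by simpa using hτ0
  have key : ∀ b : ℂ, b.re = 0 →
      ‖Complex.Gamma (Complex.I * τ) * ((ε : ℂ) + b) ^ (-(Complex.I * τ))‖ ≤ B := by
    intro b hb
    refine hB τ hτ _ (fun h => hε.ne' ?_) ?_
    · simpa [hb] using congrArg Complex.re h
    · simpa [hb] using hε.le
  have h1 := key (-(x * Complex.I)) (by simp)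
  have h2 := key (-Complex.I) (by simp)
  have h3 := key Complex.I (by simp)
  rw [← sub_eq_add_neg] at h1 h2
  rw [mellinValue, if_neg hs, mul_sub, mul_sub, mul_left_comm, mul_left_comm (Complex.Gamma _)]
  refine (norm_sub_le _ _).trans ((add_le_add_left (norm_sub_le _ _) _).trans ?_)
  rw [norm_mul (1 / 2 : ℂ), norm_mul (1 / 2 : ℂ)]
  have : ‖(1 / 2 : ℂ)‖ = 1 / 2 := by norm_num
  rw [this]
  linarith

/-! ### Primitives of the regularised kernel -/

/-- The primitive of `t ↦ e^(-at)` vanishing at `0`. -/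
def expPrim (a : ℂ) (y : ℝ) : ℂ := (1 - Complex.exp (-(a * y))) / a

/-- The primitive of `regKernel x ε` vanishing at `0`. -/
def regPrim (x ε y : ℝ) : ℂ :=
  expPrim ((ε : ℂ) - x * Complex.I) y - 1 / 2 * expPrim ((ε : ℂ) - Complex.I) y
    - 1 / 2 * expPrim ((ε : ℂ) + Complex.I) y

lemma hasDerivAt_expPrim {a : ℂ} (ha : a ≠ 0) (y : ℝ) :
    HasDerivAt (expPrim a) (Complex.exp (-(a * y))) y := by
  have h1 : HasDerivAt (fun y : ℝ => -(a * (y : ℂ))) (-a) y := by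
    simpa using ((Complex.ofRealCLM.hasDerivAt (x := y)).const_mul a).fun_neg
  have h2 := (h1.cexp.const_sub 1).div_const a
  exact h2.congr_deriv (by rw [div_eq_iff ha]; ring)

lemma ne_zero_of_im {a : ℂ} (h : a.im ≠ 0) : a ≠ 0 := fun h0 => h (by simp [h0])

lemma hasDerivAt_regPrim {x : ℝ} (hx : x ≠ 0) (ε y : ℝ) :
    HasDerivAt (regPrim x ε) (regKernel x ε y) y := by
  have hA : (ε : ℂ) - x * Complex.I ≠ 0 := ne_zero_of_im (by simpa using hx)
  have hB : (ε : ℂ) - Complex.I ≠ 0 := ne_zero_of_im (by simp)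
  have hB' : (ε : ℂ) + Complex.I ≠ 0 := ne_zero_of_im (by simp)
  exact ((hasDerivAt_expPrim hA y).sub ((hasDerivAt_expPrim hB y).const_mul _)).sub
    ((hasDerivAt_expPrim hB' y).const_mul _)

lemma integral_regKernel {x : ℝ} (hx : x ≠ 0) (ε y : ℝ) :
    ∫ t in (0 : ℝ)..y, regKernel x ε t = regPrim x ε y := by
  rw [intervalIntegral.integral_eq_sub_of_hasDerivAt
    (fun t _ => hasDerivAt_regPrim hx ε t) ((continuous_regKernel x ε).intervalIntegrable _ _)]
  simp [regPrim, expPrim]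

lemma norm_expPrim_le {a : ℂ} (ha : 0 ≤ a.re) (him : a.im ≠ 0) {y : ℝ} (hy : 0 ≤ y) :
    ‖expPrim a y‖ ≤ 2 / |a.im| := by
  rw [expPrim, norm_div]
  have h1 : ‖1 - Complex.exp (-(a * y))‖ ≤ 2 := by
    refine (norm_sub_le _ _).trans ?_
    have : ‖Complex.exp (-(a * y))‖ ≤ 1 := by
      rw [Complex.norm_exp]
      simpa using mul_nonneg ha hy
    rw [norm_one]
    linarith
  have h2 := Complex.abs_im_le_norm a
  have h3 : 0 < |a.im| := abs_pos.2 him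
  gcongr

/-- The primitives `regPrim x ε` are dominated, uniformly in `ε ≥ 0`, by a multiple of
`min (y ^ 2) 1`: they are bounded because the kernel oscillates, and `O(y ^ 2)` because it vanishes
at `0`. -/
lemma norm_regPrim_le {x : ℝ} (hx : x ≠ 0) {ε y : ℝ} (hε : 0 ≤ ε) (hy : 0 ≤ y) :
    ‖regPrim x ε y‖ ≤ (2 / |x| + 2 + (|x| + 1)) * min (y ^ 2) 1 := by
  have hx' : 0 < |x| := abs_pos.2 hx
  have b1 : ‖regPrim x ε y‖ ≤ 2 / |x| + 2 := by
    have h1 := norm_expPrim_le (a := (ε : ℂ) - x * Complex.I) (by simpa using hε)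
      (by simpa using hx) hy
    have h2 := norm_expPrim_le (a := (ε : ℂ) - Complex.I) (by simpa using hε) (by simp) hy
    have h3 := norm_expPrim_le (a := (ε : ℂ) + Complex.I) (by simpa using hε) (by simp) hy
    simp at h1 h2 h3
    refine (norm_sub_le _ _).trans ((add_le_add_left (norm_sub_le _ _) _).trans ?_)
    rw [norm_mul (1 / 2 : ℂ), norm_mul (1 / 2 : ℂ)]
    have : ‖(1 / 2 : ℂ)‖ = 1 / 2 := by norm_num
    rw [this]
    linarith
  have b2 : ‖regPrim x ε y‖ ≤ (|x| + 1) * y ^ 2 := by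
    rw [← integral_regKernel hx]
    have := intervalIntegral.norm_integral_le_of_norm_le_const (a := 0) (b := y)
      (f := regKernel x ε) (C := (|x| + 1) * y) ?_
    · rw [sub_zero, abs_of_nonneg hy] at this
      linarith
    · intro t ht
      rw [uIoc_of_le hy] at ht
      refine (norm_regKernel_le x ε ht.1.le).trans ?_
      have : Real.exp (-(ε * t)) ≤ 1 := by
        rw [Real.exp_le_one_iff]; nlinarith [ht.1]
      calc (|x| + 1) * t * Real.exp (-(ε * t)) ≤ (|x| + 1) * y * 1 := by
            refine mul_le_mul ?_ this (Real.exp_pos _).le (mul_nonneg (by positivity) hy)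
            exact mul_le_mul_of_nonneg_left ht.2 (by positivity)
        _ = _ := mul_one _
  rcases min_cases (y ^ 2) 1 with ⟨h, _⟩ | ⟨h, _⟩ <;> rw [h]
  · refine b2.trans (mul_le_mul_of_nonneg_right ?_ (sq_nonneg y))
    linarith [div_pos two_pos hx']
  · linarith

lemma tendsto_regPrim {x : ℝ} (hx : x ≠ 0) (y : ℝ) :
    Tendsto (fun ε : ℝ => regPrim x ε y) (nhdsWithin 0 (Ioi 0)) (nhds (regPrim x 0 y)) := by
  refine Tendsto.mono_left ?_ nhdsWithin_le_nhds
  change ContinuousAt (fun ε : ℝ => regPrim x ε y) 0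
  have key : ∀ b : ℂ, b ≠ 0 → ContinuousAt (fun ε : ℝ => expPrim ((ε : ℂ) + b) y) 0 := by
    intro b hb
    unfold expPrim
    exact ContinuousAt.div (by fun_prop) (by fun_prop) (by simpa using hb)
  have h1 := key (-(x * Complex.I)) (by simpa using hx)
  have h2 := key (-Complex.I) (by simp)
  simp only [← sub_eq_add_neg] at h1 h2
  exact (h1.sub (h2.const_mul _)).sub ((key Complex.I (by simp)).const_mul _)

/-- Without regularisation, `ix` times the primitive is the integrand of the theorem. -/
lemma I_mul_regPrim_zero {x : ℝ} (hx : x ≠ 0) (y : ℝ) :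
    Complex.I * x * regPrim x 0 y = Complex.exp (Complex.I * (x : ℂ) * (y : ℂ)) - 1
        - Complex.I * (x : ℂ) * ((Real.sin y : ℝ) : ℂ) := by
  have hx' : (x : ℂ) ≠ 0 := by exact_mod_cast hx
  rw [Complex.ofReal_sin, Complex.sin]
  simp only [regPrim, expPrim, Complex.ofReal_zero, zero_sub, zero_add]
  rw [show -(-((x : ℂ) * Complex.I) * y) = Complex.I * x * y by ring,
    show -(-Complex.I * (y : ℂ)) = y * Complex.I by ring,
    show -(Complex.I * (y : ℂ)) = -y * Complex.I by ring]
  have hI := Complex.I_ne_zero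
  have h1 : ∀ z : ℂ, Complex.I * x * (z / -(x * Complex.I)) = -z := fun z => by field_simp
  have h2 : ∀ z : ℂ, z / -Complex.I = z * Complex.I := fun z => by
    rw [div_neg, Complex.div_I, neg_neg]
  rw [mul_sub, mul_sub, h1, h2, Complex.div_I]
  ring

/-! ### Integration against measures given by their tails -/

/-- A measure carried by `(0, ∞)` with finite tails `(r, ∞)`, `r > 0`, is σ-finite. -/
lemma sigmaFinite_of_tail {φ : Measure ℝ} (h0 : φ (Iic 0) = 0)
    (h : ∀ r : ℝ, 0 < r → φ (Ioi r) ≠ ⊤) : SigmaFinite φ := by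
  refine ⟨⟨⟨fun n : ℕ => Iic 0 ∪ Ioi (1 / ((n : ℝ) + 1)), fun _ => trivial, fun n => ?_, ?_⟩⟩⟩
  · refine (measure_union_le _ _).trans_lt ?_
    rw [h0, zero_add]
    exact lt_top_iff_ne_top.2 (h _ (by positivity))
  · refine eq_univ_of_forall fun y => mem_iUnion.2 ?_
    rcases le_or_gt y 0 with hy | hy
    · exact ⟨0, Or.inl hy⟩
    · obtain ⟨n, hn⟩ := exists_nat_one_div_lt hy
      exact ⟨n, Or.inr hn⟩

lemma ae_pos_of_Iic {φ : Measure ℝ} (h0 : φ (Iic 0) = 0) : ∀ᵐ y ∂φ, 0 < y := by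
  rw [ae_iff]
  simpa [not_lt, Iic] using h0

/-- If `φ (r, ∞) ≤ M / r` for all `r > 0`, then `∫ min(y², 1) dφ ≤ ∫₀¹ M t^(-1/2) dt < ∞` by the
layer cake formula. -/
lemma integrable_min_sq {φ : Measure ℝ} (h0 : φ (Iic 0) = 0) {M : ℝ}
    (h : ∀ r : ℝ, 0 < r → φ (Ioi r) ≤ ENNReal.ofReal (M * r⁻¹)) :
    Integrable (fun y : ℝ => min (y ^ 2) 1) φ := by
  have hnn : ∀ y : ℝ, 0 ≤ min (y ^ 2) 1 := fun y => le_min (sq_nonneg y) zero_le_one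
  have hcont : Continuous (fun y : ℝ => min (y ^ 2) 1) := by fun_prop
  refine ⟨hcont.aestronglyMeasurable, ?_⟩
  rw [hasFiniteIntegral_iff_ofReal (Eventually.of_forall hnn),
    lintegral_eq_lintegral_meas_lt φ (Eventually.of_forall hnn) hcont.aemeasurable]
  have hint : IntegrableOn (fun t : ℝ => M * t ^ (-(1 / 2) : ℝ)) (Ioc 0 1) := by
    have := (intervalIntegral.intervalIntegrable_rpow' (a := 0) (b := 1) (r := -(1 / 2))
      (by norm_num)).const_mul M
    rwa [intervalIntegrable_iff_integrableOn_Ioc_of_le zero_le_one] at this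
  have hle : ∀ t ∈ Ioi (0 : ℝ), φ {y | t < min (y ^ 2) 1} ≤
      (Ioc (0 : ℝ) 1).indicator (fun t => ENNReal.ofReal (M * t ^ (-(1 / 2) : ℝ))) t := by
    intro t ht
    have ht' : (0 : ℝ) < t := ht
    by_cases ht1 : t ≤ 1
    · rw [indicator_of_mem (show t ∈ Ioc (0 : ℝ) 1 from ⟨ht', ht1⟩)]
      have hs : φ {y | t < min (y ^ 2) 1} ≤ φ (Iic 0 ∪ Ioi (Real.sqrt t)) := by
        refine measure_mono fun y hy => ?_
        rcases le_or_gt y 0 with hy0 | hy0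
        · exact Or.inl hy0
        · exact Or.inr ((Real.sqrt_lt' hy0).2 (lt_min_iff.1 hy).1)
      refine hs.trans ((measure_union_le _ _).trans ?_)
      rw [h0, zero_add]
      refine (h _ (Real.sqrt_pos.2 ht')).trans (le_of_eq ?_)
      rw [Real.sqrt_eq_rpow, Real.rpow_neg ht'.le]
    · have : {y : ℝ | t < min (y ^ 2) 1} = ∅ := by
        ext y
        simp only [mem_ofPred_eq, mem_empty_iff_false, iff_false, not_lt]
        exact (min_le_right _ _).trans (not_le.1 ht1).le
      rw [this, measure_empty]
      exact zero_le
  refine (setLIntegral_mono' measurableSet_Ioi hle).trans_lt ?_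
  refine (setLIntegral_le_lintegral _ _).trans_lt ?_
  rw [lintegral_indicator measurableSet_Ioc]
  exact hint.lintegral_lt_top

/-- Fubini's theorem for the regularised primitive:
`∫ (∫₀^y k(t) dt) dφ(y) = ∫₀^∞ k(t) φ(t, ∞) dt`. -/
lemma integral_regPrim_eq {φ : Measure ℝ} (h0 : φ (Iic 0) = 0) {T : ℝ → ℝ} {M : ℝ}
    (hT : ∀ r : ℝ, 0 < r → φ (Ioi r) = ENNReal.ofReal (T r))
    (hTM : ∀ r : ℝ, 0 < r → 0 ≤ T r ∧ T r ≤ M * r⁻¹)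
    {x : ℝ} (hx : x ≠ 0) {ε : ℝ} (hε : 0 < ε) :
    ∫ y, regPrim x ε y ∂φ = ∫ t in Ioi 0, regKernel x ε t * (T t : ℂ) := by
  have hfin : ∀ r : ℝ, 0 < r → φ (Ioi r) ≠ ⊤ := fun r hr => by
    rw [hT r hr]; exact ENNReal.ofReal_ne_top
  have := sigmaFinite_of_tail h0 hfin
  have hreal : ∀ r : ℝ, 0 < r → φ.real (Ioi r) = T r := fun r hr => by
    rw [measureReal_def, hT r hr, ENNReal.toReal_ofReal (hTM r hr).1]
  set F : ℝ → ℝ → ℂ := fun y t => (Ioi t).indicator (fun _ => regKernel x ε t) y with hF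
  have hmeas : Measurable (Function.uncurry F) := by
    have : Function.uncurry F =
        {p : ℝ × ℝ | p.2 < p.1}.indicator (fun p => regKernel x ε p.2) := by
      ext ⟨y, t⟩
      simp [hF, Function.uncurry, indicator, mem_Ioi]
    rw [this]
    exact ((continuous_regKernel x ε).measurable.comp measurable_snd).indicator
      (measurableSet_lt measurable_snd measurable_fst)
  have hint : Integrable (Function.uncurry F) (φ.prod (volume.restrict (Ioi 0))) := by
    rw [integrable_prod_iff' hmeas.aestronglyMeasurable]
    constructor
    · refine (ae_restrict_iff' measurableSet_Ioi).2 (Eventually.of_forall fun t ht => ?_)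
      exact (integrable_indicator_iff measurableSet_Ioi).2 
        (integrableOn_const (C := regKernel x ε t) (hfin t ht))
    · have e : ∀ t ∈ Ioi (0 : ℝ), ∫ y, ‖Function.uncurry F (y, t)‖ ∂φ =
          T t * ‖regKernel x ε t‖ := by
        intro t ht
        simp only [Function.uncurry, hF, norm_indicator_eq_indicator_norm]
        rw [integral_indicator measurableSet_Ioi, setIntegral_const, hreal t ht, smul_eq_mul]
      refine Integrable.mono' (g := fun t => M * (|x| + 1) * Real.exp (-ε * t))
        ((exp_neg_integrableOn_Ioi 0 hε).const_mul _) ?_ ?_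
      · exact (hmeas.norm.stronglyMeasurable.integral_prod_left').aestronglyMeasurable
      · refine (ae_restrict_iff' measurableSet_Ioi).2 (Eventually.of_forall fun t ht => ?_)
        have ht' : (0 : ℝ) < t := ht
        obtain ⟨hT0, hT1⟩ := hTM t ht
        rw [e t ht, Real.norm_of_nonneg (mul_nonneg hT0 (norm_nonneg _))]
        calc T t * ‖regKernel x ε t‖
            ≤ (M * t⁻¹) * ((|x| + 1) * t * Real.exp (-(ε * t))) :=
              mul_le_mul hT1 (norm_regKernel_le x ε ht'.le) (norm_nonneg _) (hT0.trans hT1)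
          _ = _ := by rw [neg_mul]; field_simp
  have hsw := integral_integral_swap hint
  have hl : ∫ y, (∫ t in Ioi 0, F y t) ∂φ = ∫ y, regPrim x ε y ∂φ := by
    refine integral_congr_ae ?_
    filter_upwards [ae_pos_of_Iic h0] with y hy
    have e : ∀ t, F y t = (Iio y).indicator (regKernel x ε) t := by
      intro t; simp [hF, indicator]
    simp_rw [e]
    rw [setIntegral_indicator measurableSet_Iio, Ioi_inter_Iio, ← integral_Ioc_eq_integral_Ioo,
      ← intervalIntegral.integral_of_le hy.le, integral_regKernel hx]
  rw [← hl, hsw]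
  refine setIntegral_congr_fun measurableSet_Ioi fun t ht => ?_
  simp only [hF]
  rw [integral_indicator measurableSet_Ioi, setIntegral_const, hreal t ht, Complex.real_smul,
    mul_comm]

/-! ### The Fourier series and the limit -/

/-- Termwise integration of the Fourier series `θ(log t) = ∑ c_k t^(ikc̃)` against the regularised
kernel. -/
lemma hasSum_mellin_regKernel {θ : ℝ → ℝ} {cfs : ℤ → ℂ} {ctil : ℝ}
    (hsum : Summable (fun k : ℤ => ‖cfs k‖))
    (hθ : ∀ u : ℝ, HasSum
      (fun k : ℤ => cfs k * Complex.exp (Complex.I * (k : ℂ) * (ctil : ℂ) * (u : ℂ))) ((θ u : ℂ)))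
    (x : ℝ) {ε : ℝ} (hε : 0 < ε) :
    HasSum (fun k : ℤ => cfs k * mellinValue x ε (Complex.I * ((k * ctil : ℝ) : ℂ)))
      (∫ t in Ioi 0, regKernel x ε t * ((t ^ (-1 : ℝ) * θ (Real.log t) : ℝ) : ℂ)) := by
  have hterm : ∀ k : ℤ, cfs k * mellinValue x ε (Complex.I * ((k * ctil : ℝ) : ℂ)) =
      ∫ t : ℝ in Ioi 0, cfs k *
        (regKernel x ε t * (t : ℂ) ^ (Complex.I * ((k * ctil : ℝ) : ℂ) - 1)) := by
    intro k
    rw [integral_const_mul, mellin_regKernel hε (by simp)]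
  simp_rw [hterm]
  refine hasSum_integral_of_dominated_convergence
    (fun k t => ‖cfs k‖ * ((|x| + 1) * Real.exp (-ε * t))) ?_ ?_ ?_ ?_ ?_
  · exact fun k => (aestronglyMeasurable_regKernel_mul_cpow _ _ _).const_mul _
  · refine fun k => (ae_restrict_iff' measurableSet_Ioi).2 (Eventually.of_forall fun t ht => ?_)
    have ht' : (0 : ℝ) < t := ht
    rw [norm_mul, norm_mul, Complex.norm_cpow_eq_rpow_re_of_pos ht']
    have e : (Complex.I * ((k * ctil : ℝ) : ℂ) - 1).re = -1 := by
      rw [Complex.sub_re, Complex.re_mul_ofReal]; simp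
    rw [e, Real.rpow_neg_one]
    refine mul_le_mul_of_nonneg_left ?_ (norm_nonneg _)
    calc ‖regKernel x ε t‖ * t⁻¹ ≤ ((|x| + 1) * t * Real.exp (-(ε * t))) * t⁻¹ := by
          gcongr
          exact norm_regKernel_le x ε ht'.le
      _ = _ := by rw [neg_mul]; field_simp
  · exact Eventually.of_forall fun t => hsum.mul_right _
  · simp_rw [tsum_mul_right]
    exact ((exp_neg_integrableOn_Ioi 0 hε).const_mul _).const_mul _
  · refine (ae_restrict_iff' measurableSet_Ioi).2 (Eventually.of_forall fun t ht => ?_)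
    have ht' : (0 : ℝ) < t := ht
    have htC : (t : ℂ) ≠ 0 := by exact_mod_cast ht'.ne'
    have h := (hθ (Real.log t)).mul_left (regKernel x ε t * (t : ℂ)⁻¹)
    rw [Real.rpow_neg_one]
    push_cast
    rw [← mul_assoc]
    refine h.congr_fun fun k => ?_
    rw [Complex.cpow_sub _ _ htC, Complex.cpow_one, Complex.cpow_def_of_ne_zero htC,
      ← Complex.ofReal_log ht'.le]
    rw [show (Real.log t : ℂ) * (Complex.I * (k * ctil)) = Complex.I * k * ctil * Real.log t by
      ring]
    ring

/-- Note: `Complex.log 0 = 0` in Mathlib, so the convention `0 · log 0 := 0` is automatic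
in the term `-c₀ · ix · log(-ix)` at `x = 0`. -/
theorem stmt7 (c : ℝ) (hc : 1 < c)
    (θ : ℝ → ℝ) (cfs : ℤ → ℂ) (hθ : IsSmoothAdmissible c 1 θ cfs)
    (ctil : ℝ) (hctil : ctil = 2 * Real.pi / Real.log c)
    (φ₁ : Measure ℝ)
    (hφ : ∀ r : ℝ, 0 < r → φ₁ (Set.Ioi r) = ENNReal.ofReal (r ^ (-1 : ℝ) * θ (Real.log r)))
    (hφ0 : φ₁ (Set.Iic 0) = 0) (x : ℝ) :
    ∫ y, (Complex.exp (Complex.I * (x : ℂ) * (y : ℂ)) - 1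
        - Complex.I * (x : ℂ) * ((Real.sin y : ℝ) : ℂ)) ∂φ₁
      = -(∑' k : {k : ℤ // k ≠ 0},
            cfs k * Complex.Gamma (Complex.I * ((k : ℤ) : ℂ) * (ctil : ℂ)) *
              ((-Complex.I * (x : ℂ)) ^ ((1 : ℂ) - Complex.I * ((k : ℤ) : ℂ) * (ctil : ℂ))
                + Complex.I * (x : ℂ) *
                  Complex.cos ((Real.pi : ℂ) / 2 * (Complex.I * ((k : ℤ) : ℂ) * (ctil : ℂ)))))
        - cfs 0 * (Complex.I * (x : ℂ)) * Complex.log (-Complex.I * (x : ℂ)) := by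
  obtain ⟨⟨hpos, -, -⟩, -, -, -, hsum, hFour⟩ := hθ
  have hlog : 0 < Real.log c := Real.log_pos hc
  have hct : 0 < ctil := by rw [hctil]; exact div_pos Real.two_pi_pos hlog
  rcases eq_or_ne x 0 with rfl | hx
  · have hz : ∀ k : {k : ℤ // k ≠ 0}, (1 : ℂ) - Complex.I * ((k : ℤ) : ℂ) * (ctil : ℂ) ≠ 0 :=
      fun k h => by simpa using congrArg Complex.re h
    simp [Complex.zero_cpow (hz _)]
  have hFour' : ∀ u : ℝ, HasSum
      (fun k : ℤ => cfs k * Complex.exp (Complex.I * (k : ℂ) * (ctil : ℂ) * (u : ℂ)))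
      ((θ u : ℂ)) := by
    intro u
    have := hFour u
    rwa [mul_one, ← hctil] at this
  -- the absolutely convergent Fourier series bounds `θ`
  set M : ℝ := ∑' k, ‖cfs k‖ with hM
  have hθM : ∀ u, θ u ≤ M := by
    intro u
    have h1 : ‖(θ u : ℂ)‖ ≤ M := by
      rw [← (hFour' u).tsum_eq]
      refine tsum_of_norm_bounded hsum.hasSum fun k => ?_
      rw [norm_mul, Complex.norm_exp]
      have : (Complex.I * (k : ℂ) * (ctil : ℂ) * (u : ℂ)).re = 0 := by simp
      rw [this, Real.exp_zero, mul_one]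
    rw [Complex.norm_real] at h1
    exact (le_abs_self _).trans h1
  have hTM : ∀ r : ℝ, 0 < r → 0 ≤ r ^ (-1 : ℝ) * θ (Real.log r) ∧
      r ^ (-1 : ℝ) * θ (Real.log r) ≤ M * r⁻¹ := by
    intro r hr
    rw [Real.rpow_neg_one]
    refine ⟨mul_nonneg (inv_pos.2 hr).le (hpos _).le, ?_⟩
    rw [mul_comm]
    gcongr
    exact hθM _
  have hbd : Integrable (fun y : ℝ => min (y ^ 2) 1) φ₁ := by
    refine integrable_min_sq hφ0 (M := M) fun r hr => ?_
    rw [hφ r hr]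
    exact ENNReal.ofReal_le_ofReal (hTM r hr).2
  have hlim1 : Tendsto (fun ε : ℝ => ∫ y, regPrim x ε y ∂φ₁) (nhdsWithin 0 (Ioi 0))
      (nhds (∫ y, regPrim x 0 y ∂φ₁)) := by
    refine tendsto_integral_filter_of_dominated_convergence _ ?_ ?_
      (hbd.const_mul (2 / |x| + 2 + (|x| + 1))) ?_
    · exact Eventually.of_forall fun ε => (continuous_iff_continuousAt.2 fun y =>
        (hasDerivAt_regPrim hx ε y).continuousAt).aestronglyMeasurable
    · filter_upwards [self_mem_nhdsWithin] with ε hε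
      filter_upwards [ae_pos_of_Iic hφ0] with y hy
      exact norm_regPrim_le hx (le_of_lt hε) hy.le
    · exact Eventually.of_forall fun y => tendsto_regPrim hx y
  set m : ℝ → ℤ → ℂ := fun ε k =>
    cfs k * mellinValue x ε (Complex.I * ((k * ctil : ℝ) : ℂ)) with hm
  have heq : ∀ᶠ ε : ℝ in nhdsWithin 0 (Ioi 0), ∑' k, m ε k = ∫ y, regPrim x ε y ∂φ₁ := by
    filter_upwards [self_mem_nhdsWithin] with ε hε
    rw [integral_regPrim_eq hφ0 hφ hTM hx hε]
    exact (hasSum_mellin_regKernel hsum hFour' x hε).tsum_eq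
  obtain ⟨B, hB0, hB⟩ := exists_bound_mellinValue hct x
  have habs : ∀ k : ℤ, k ≠ 0 → ctil ≤ |(k * ctil : ℝ)| := by
    intro k hk
    rw [abs_mul, abs_of_pos hct]
    have : (1 : ℝ) ≤ |(k : ℝ)| := by exact_mod_cast Int.one_le_abs hk
    nlinarith
  -- the term `k = 0` is not covered by `hB`, but it is bounded as `ε → 0` since it converges
  have hlim_m : ∀ k, Tendsto (fun ε => m ε k) (nhdsWithin 0 (Ioi 0)) (nhds (m 0 k)) :=
    fun k => (tendsto_mellinValue hx _).const_mul _
  set B' : ℝ := max B (‖mellinValue x 0 0‖ + 1)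
  have hdom : ∀ᶠ ε : ℝ in nhdsWithin 0 (Ioi 0), ∀ k, ‖m ε k‖ ≤ ‖cfs k‖ * B' := by
    have h0 := (tendsto_mellinValue hx 0).norm.eventually
      (ge_mem_nhds (lt_add_one ‖mellinValue x 0 0‖))
    filter_upwards [self_mem_nhdsWithin, h0] with ε hε h0 k
    rw [hm, norm_mul]
    gcongr
    by_cases hk : k = 0
    · subst hk
      have h1 : ‖mellinValue x ε 0‖ ≤ B' := h0.trans (le_max_right B _)
      simpa using h1
    · exact (hB _ (habs k hk) ε hε).trans (le_max_left _ _)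
  have hlim2 : Tendsto (fun ε : ℝ => ∑' k, m ε k) (nhdsWithin 0 (Ioi 0)) (nhds (∑' k, m 0 k)) :=
    tendsto_tsum_of_dominated_convergence (hsum.mul_right B') hlim_m hdom
  have hval : ∫ y, regPrim x 0 y ∂φ₁ = ∑' k, m 0 k :=
    tendsto_nhds_unique hlim1 (hlim2.congr' heq)
  have hms : Summable (m 0) := by
    refine Summable.of_norm_bounded (hsum.mul_right B') fun k => ?_
    exact le_of_tendsto (hlim_m k).norm (hdom.mono fun ε h => h k)
  calc ∫ y, (Complex.exp (Complex.I * (x : ℂ) * (y : ℂ)) - 1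
        - Complex.I * (x : ℂ) * ((Real.sin y : ℝ) : ℂ)) ∂φ₁
      = Complex.I * x * ∑' k, m 0 k := by
        simp_rw [← I_mul_regPrim_zero hx]
        rw [integral_const_mul, hval]
    _ = Complex.I * x * (m 0 0 + ∑' k : {k : ℤ // k ≠ 0}, m 0 k) := by
        congr 1
        exact ((hms.subtype ({0} : Set ℤ)).tsum_add_tsum_compl (hms.subtype _)).symm.trans
          (congrArg₂ (· + ·) (tsum_singleton 0 (m 0)) rfl)
    _ = _ := by
        rw [mul_add, ← tsum_mul_left, add_comm, ← tsum_neg, sub_eq_add_neg]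
        congr 1
        · refine tsum_congr fun k => ?_
          have hs : Complex.I * ((((k : ℤ) : ℝ) * ctil : ℝ) : ℂ) ≠ 0 := by
            have hk : ((k : ℤ) : ℝ) ≠ 0 := by exact_mod_cast k.2
            have : ((k : ℤ) : ℝ) * ctil ≠ 0 := mul_ne_zero hk hct.ne'
            exact mul_ne_zero Complex.I_ne_zero (by exact_mod_cast this)
          have h := I_mul_mellinValue_zero hx hs
          rw [hm]
          dsimp only
          rw [mul_left_comm, h]
          push_cast
          rw [← mul_assoc Complex.I]
          ring
        · rw [hm]
          dsimp only
          rw [Int.cast_zero, zero_mul, Complex.ofReal_zero, mul_zero, mellinValue_zero_zero]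
          ring
end
end
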